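/- arXiv:2012.11565 — 2 statements merged into one kernel-verified Lean document; each statement's English description precedes it below -/
import Mathlib

section
/- Let δ > 0, X ≥ H ≥ 2 and 2 ≤ D₀ ≤ X^{1−δ}. For d ∈ ℕ set γ_{d,H} = Σ_{m ≥ 1, gcd(m,d)=1} (d/(πm) · sin(πmH/d))². Let λ : ℕ → ℝ satisfy |λ_d| ≤ 1 for all d and λ_d = 0 for d > D₀, and let g : ℝ → ℝ be smooth and compactly supported in [1/4, 2], with ĝ(0) = ∫ g. Then ∫_ℝ g(y/X)·(Σ_{d,m ≥ 1 : y−H < dm ≤ y} λ_d − H·Σ_{d ≤ D₀} λ_d/d)² dy = S₁ + S₂ + S₃ + O(H³(log X)³), where S₁ = 2ĝ(0)·X·Σ_{d ≤ D₀} γ_{d,H}·(Σ_{m ≤ D₀, d | m} λ_m/m)², S₂ = Σ_{0 < |k| ≤ H} (H − |k|)·Σ_{d₁,d₂ ≤ D₀, gcd(d₁,d₂) | k} λ_{d₁}λ_{d₂}·(Σ_{m₁,m₂ ≥ 1 : d₁m₁ = d₂m₂ + k} g(d₁m₁/X) − ĝ(0)·X/lcm(d₁,d₂)), and S₃ = H·Σ_n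 g(n/X)·(Σ_{d | n} λ_d)² − ĝ(0)·H·X·X^{−10}·Σ_{n ≤ X^{10}} (Σ_{d | n} λ_d)²; the implied constant depends only on g and δ. -/
open Real MeasureTheory
open scoped Classical

/-!
Write `A = ∑ λ_d / d`, `I = ∫ g` and `a = 1 * λ`. The type I sum over `(y - H, y]` is
`∑ a(n) 1_{[n, n + H)}(y)`, so expanding the square gives a correlation of `a` weighted by the
integrals of `g (y / X)` over `[n₁, n₁ + H) ∩ [n₂, n₂ + H)`, a cross term, and `H² A² X I`.

* As `g` is Lipschitz, the overlap integrals are `max (H - |n₁ - n₂|) 0 * g (n₁ / X)` up to an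
  error of relative size `H / X`; Schur's test and `∑_{n ≤ N} a(n)² ≪ N (log D)³` control it.
* In the cross term, Poisson summation over the multiples of each `d` leaves only the zero
  frequency, because `d / X ≤ X ^ (-δ)`. The cross term is thus `-2 H² A² X I`.
* The main term is a Fejér sum over `k = n₁ - n₂`. Its mean value is explicit:
  `a(n) a(n + k)` has mean `∑ λ_{d₁} λ_{d₂} / [d₁, d₂]` over the pairs with `(d₁, d₂) ∣ k`, and
  the Fejér sum over the multiples of a fixed modulus is evaluated by a Fourier series whose
  coefficients, grouped by the reduced denominator, are the `γ_{d,H}`.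
  This yields `S₁` and cancels the `H² A² X I`.
* The deviation from the mean value is `S₂` for `k ≠ 0` and `S₃` for `k = 0`, where the mean of
  `a²` is replaced by its average up to `X ^ 10`.
-/

section Expansion

open Finset

/-- The coefficient `γ_{d,H}` weighting the modulus `d` in the diagonal term. -/
noncomputable def gammaCoeff (H : ℝ) (d : ℕ) : ℝ :=
  ∑' m : ℕ, if 1 ≤ m ∧ Nat.gcd m d = 1 then
    ((d : ℝ) / (π * m) * sin (π * m * H / d)) ^ 2 else 0

/-- The Dirichlet convolution `1 * λ`, whose short sums are the type I sums. -/
noncomputable def divisorSum (lam : ℕ → ℝ) (n : ℕ) : ℝ := ∑ d ∈ n.divisors, lam d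

/-- The quadratic form `∑_{d₁, d₂ ≤ D} λ_{d₁} λ_{d₂} Φ(d₁, d₂)`; every main term of the expansion is
of this shape. -/
noncomputable def pairSum (lam : ℕ → ℝ) (D : ℕ) (Φ : ℕ → ℕ → ℝ) : ℝ :=
  ∑ d₁ ∈ Icc 1 D, ∑ d₂ ∈ Icc 1 D, lam d₁ * lam d₂ * Φ d₁ d₂

variable {lam : ℕ → ℝ} {D : ℕ}

lemma pairSum_congr {Φ Ψ : ℕ → ℕ → ℝ}
    (h : ∀ d₁ ∈ Icc 1 D, ∀ d₂ ∈ Icc 1 D, Φ d₁ d₂ = Ψ d₁ d₂) :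
    pairSum lam D Φ = pairSum lam D Ψ :=
  sum_congr rfl fun d₁ h₁ => sum_congr rfl fun d₂ h₂ => by rw [h d₁ h₁ d₂ h₂]

lemma pairSum_add (Φ Ψ : ℕ → ℕ → ℝ) :
    pairSum lam D (fun d₁ d₂ => Φ d₁ d₂ + Ψ d₁ d₂) = pairSum lam D Φ + pairSum lam D Ψ := by
  simp only [pairSum, mul_add, sum_add_distrib]

lemma pairSum_const_mul (c : ℝ) (Φ : ℕ → ℕ → ℝ) :
    pairSum lam D (fun d₁ d₂ => c * Φ d₁ d₂) = c * pairSum lam D Φ := by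
  simp only [pairSum, mul_sum, mul_left_comm c]

lemma pairSum_sub (Φ Ψ : ℕ → ℕ → ℝ) :
    pairSum lam D (fun d₁ d₂ => Φ d₁ d₂ - Ψ d₁ d₂) = pairSum lam D Φ - pairSum lam D Ψ := by
  simp only [pairSum, mul_sub, sum_sub_distrib]

lemma pairSum_sum {ι : Type*} (s : Finset ι) (Φ : ι → ℕ → ℕ → ℝ) :
    pairSum lam D (fun d₁ d₂ => ∑ i ∈ s, Φ i d₁ d₂) = ∑ i ∈ s, pairSum lam D (Φ i) := by
  simp only [pairSum, mul_sum]
  rw [sum_comm]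
  simp only [sum_comm (s := s)]
  rw [sum_comm]

lemma pairSum_mul (u v : ℕ → ℝ) :
    pairSum lam D (fun d₁ d₂ => u d₁ * v d₂) =
      (∑ d ∈ Icc 1 D, lam d * u d) * ∑ d ∈ Icc 1 D, lam d * v d := by
  simp only [pairSum, sum_mul_sum, mul_mul_mul_comm]

lemma abs_pairSum_le (hlam : ∀ d, |lam d| ≤ 1) {Φ Ψ : ℕ → ℕ → ℝ}
    (h : ∀ d₁ ∈ Icc 1 D, ∀ d₂ ∈ Icc 1 D, |Φ d₁ d₂| ≤ Ψ d₁ d₂) :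
    |pairSum lam D Φ| ≤ ∑ d₁ ∈ Icc 1 D, ∑ d₂ ∈ Icc 1 D, Ψ d₁ d₂ := by
  refine (abs_sum_le_sum_abs _ _).trans <| sum_le_sum fun d₁ h₁ =>
    (abs_sum_le_sum_abs _ _).trans <| sum_le_sum fun d₂ h₂ => ?_
  rw [abs_mul, abs_mul]
  calc |lam d₁| * |lam d₂| * |Φ d₁ d₂| ≤ 1 * |Φ d₁ d₂| := by
        gcongr
        exact mul_le_one₀ (hlam d₁) (abs_nonneg _) (hlam d₂)
    _ ≤ Ψ d₁ d₂ := by simpa using h d₁ h₁ d₂ h₂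

lemma sum_Icc_ite_dvd {M : Type*} [AddCommMonoid M] {r : ℕ} (hr : 0 < r) (N : ℕ) (f : ℕ → M) :
    ∑ l ∈ Icc 1 N, (if r ∣ l then f l else 0) = ∑ i ∈ Icc 1 (N / r), f (r * i) := by
  rw [← sum_filter]
  have himage : {l ∈ Icc 1 N | r ∣ l} = (Icc 1 (N / r)).image (r * ·) := by
    ext l
    simp only [mem_filter, mem_Icc, mem_image, Nat.le_div_iff_mul_le hr]
    constructor
    · rintro ⟨⟨hl, hlN⟩, i, rfl⟩
      exact ⟨i, ⟨Nat.pos_of_mul_pos_left hl, by rwa [mul_comm]⟩, rfl⟩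
    · rintro ⟨i, ⟨hi, hiN⟩, rfl⟩
      exact ⟨⟨Nat.mul_pos hr hi, by rwa [mul_comm]⟩, dvd_mul_right r i⟩
  rw [himage, sum_image fun i _ j _ hij => Nat.eq_of_mul_eq_mul_left hr hij]

lemma sum_divisors_eq_sum_Icc {M : Type*} [AddCommMonoid M] {n : ℕ} (hn : n ≠ 0) {f : ℕ → M}
    (hf : ∀ d, D < d → d ∣ n → f d = 0) :
    ∑ d ∈ n.divisors, f d = ∑ d ∈ Icc 1 D, if d ∣ n then f d else 0 := by
  rw [← sum_filter]
  refine (sum_subset (fun d hd => ?_) fun d hd hd' => ?_).symm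
  · exact Nat.mem_divisors.2 ⟨(mem_filter.1 hd).2, hn⟩
  · have hdn := Nat.dvd_of_mem_divisors hd
    refine hf d (lt_of_not_ge fun hdD => hd' ?_) hdn
    exact mem_filter.2 ⟨mem_Icc.2 ⟨Nat.pos_of_mem_divisors hd, hdD⟩, hdn⟩

lemma sum_divisors_gcd {M : Type*} [AddCommMonoid M] {a : ℕ} (ha : a ∈ Icc 1 D) (b : ℕ)
    (f : ℕ → M) :
    ∑ d ∈ (Nat.gcd a b).divisors, f d = ∑ d ∈ Icc 1 D, if d ∣ a ∧ d ∣ b then f d else 0 := by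
  obtain ⟨ha₀, haD⟩ := mem_Icc.1 ha
  have hgcd : Nat.gcd a b ≠ 0 := (Nat.gcd_pos_of_pos_left b ha₀).ne'
  simp_rw [← Nat.dvd_gcd_iff]
  refine sum_divisors_eq_sum_Icc hgcd fun d hd hdvd => absurd hd (not_lt.2 ?_)
  exact (Nat.le_of_dvd ha₀ (hdvd.trans (Nat.gcd_dvd_left a b))).trans haD

lemma divisorSum_eq_sum_Icc (hsupp : ∀ d, D < d → lam d = 0) {n : ℕ} (hn : n ≠ 0) :
    divisorSum lam n = ∑ d ∈ Icc 1 D, lam d * if d ∣ n then 1 else 0 := by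
  rw [divisorSum, sum_divisors_eq_sum_Icc hn fun d hd _ => hsupp d hd]
  simp only [mul_ite, mul_one, mul_zero]

lemma divisorSum_mul_divisorSum (hsupp : ∀ d, D < d → lam d = 0) {m n : ℕ} (hm : m ≠ 0)
    (hn : n ≠ 0) :
    divisorSum lam m * divisorSum lam n =
      pairSum lam D fun d₁ d₂ => (if d₁ ∣ m then 1 else 0) * if d₂ ∣ n then 1 else 0 := by
  rw [divisorSum_eq_sum_Icc hsupp hm, divisorSum_eq_sum_Icc hsupp hn, pairSum_mul]

lemma one_div_lcm (a b : ℕ) : (1 : ℝ) / Nat.lcm a b = Nat.gcd a b / ((a : ℝ) * b) := by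
  rcases eq_or_ne (Nat.gcd a b) 0 with h | h
  · obtain ⟨rfl, rfl⟩ := Nat.gcd_eq_zero_iff.1 h
    simp
  · rw [← Nat.cast_mul, ← Nat.gcd_mul_lcm a b, Nat.cast_mul,
      div_mul_cancel_left₀ (by exact_mod_cast h), one_div]

/-! ### The Fejér sum over the multiples of a modulus -/

lemma hasSum_sq_sin_mul_pi (x : ℝ) :
    HasSum (fun j : ℕ => (sin (π * j * x) / (π * j)) ^ 2)
      (Int.fract x * (1 - Int.fract x) / 2) := by
  have hcos (j : ℕ) : cos (2 * π * j * Int.fract x) = 1 - 2 * sin (π * j * x) ^ 2 := by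
    have hperiod : 2 * π * j * Int.fract x =
        2 * (π * j * x) - ((j * ⌊x⌋ : ℤ) : ℝ) * (2 * π) := by
      rw [← Int.self_sub_floor]
      push_cast
      ring
    rw [hperiod, cos_sub_int_mul_two_pi, cos_two_mul, cos_sq']
    ring
  have hbernoulli := hasSum_one_div_nat_pow_mul_cos one_ne_zero
    ⟨Int.fract_nonneg x, (Int.fract_lt_one x).le⟩
  rw [← bernoulliFun, mul_one, bernoulliFun_two] at hbernoulli
  have hsum := (hasSum_zeta_two.sub hbernoulli).div_const (2 * π ^ 2)
  simp only [hcos] at hsum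
  have hvalue : (π ^ 2 / 6 - (-1) ^ (1 + 1) * (2 * π) ^ 2 / 2 / (Nat.factorial 2 : ℕ) *
      (Int.fract x ^ 2 - Int.fract x + 6⁻¹)) / (2 * π ^ 2) =
        Int.fract x * (1 - Int.fract x) / 2 := by
    rw [Nat.factorial_two]
    push_cast
    field_simp
    ring
  rw [hvalue] at hsum
  exact hsum.congr_fun fun j => by ring

lemma sum_divisors_tsum_ite_gcd {r : ℕ} (hr : r ≠ 0) {f : ℕ → ℝ} (hf : Summable f) :
    ∑ e ∈ r.divisors, ∑' j, (if Nat.gcd j r = e then f j else 0) = ∑' j, f j := by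
  have hsummable (e : ℕ) : Summable fun j => if Nat.gcd j r = e then f j else 0 :=
    .of_norm_bounded hf.norm fun j => by split_ifs <;> simp
  rw [← Summable.tsum_finsetSum fun e _ => hsummable e]
  refine tsum_congr fun j => ?_
  rw [sum_ite_eq, if_pos (Nat.mem_divisors.2 ⟨Nat.gcd_dvd_right j r, hr⟩)]

lemma gammaCoeff_eq_tsum_ite_gcd (H : ℝ) {d e : ℕ} (he : 0 < e) :
    gammaCoeff H d = ∑' j : ℕ, if Nat.gcd j (e * d) = e then
      (((e * d : ℕ) : ℝ) / (π * j) * sin (π * j * H / (e * d : ℕ))) ^ 2 else 0 := by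
  have hinj : Function.Injective (e * ·) := fun _ _ h => Nat.eq_of_mul_eq_mul_left he h
  rw [← hinj.tsum_eq, gammaCoeff]
  · refine tsum_congr fun m => ?_
    simp only [Nat.gcd_mul_left, Nat.mul_eq_left he.ne']
    rcases Nat.eq_zero_or_pos m with rfl | hm
    · simp
    · have he' : (e : ℝ) ≠ 0 := by positivity
      have hsin : π * ((e * m : ℕ) : ℝ) * H / (e * d : ℕ) = π * m * H / d := by
        push_cast
        rw [show π * (e * m) * H = e * (π * m * H) by ring, mul_div_mul_left _ _ he']
      have hcoeff : ((e * d : ℕ) : ℝ) / (π * (e * m : ℕ)) = d / (π * m) := by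
        push_cast
        rw [mul_left_comm π, mul_div_mul_left _ _ he']
      simp only [Nat.one_le_iff_ne_zero, hm.ne', ne_eq, not_false_eq_true, true_and, hsin, hcoeff]
  · intro j hj
    obtain ⟨hgcd, -⟩ := Classical.not_imp.1 (mt ite_eq_right_iff.2 hj)
    obtain ⟨m, rfl⟩ : e ∣ j := hgcd ▸ Nat.gcd_dvd_left _ _
    exact ⟨m, rfl⟩

lemma sum_divisors_gammaCoeff (H : ℝ) {r : ℕ} (hr : r ≠ 0) :
    ∑ d ∈ r.divisors, gammaCoeff H d =
      (r : ℝ) ^ 2 * (Int.fract (H / r) * (1 - Int.fract (H / r)) / 2) := by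
  have hsum := (hasSum_sq_sin_mul_pi (H / r)).mul_left ((r : ℝ) ^ 2)
  have hterm (j : ℕ) : (r : ℝ) ^ 2 * (sin (π * j * (H / r)) / (π * j)) ^ 2 =
      (r / (π * j) * sin (π * j * H / r)) ^ 2 := by
    rw [mul_div_assoc]
    ring
  simp only [hterm] at hsum
  rw [← hsum.tsum_eq, ← sum_divisors_tsum_ite_gcd hr hsum.summable,
    ← Nat.sum_div_divisors r (gammaCoeff H)]
  refine sum_congr rfl fun e he => ?_
  have he₀ := Nat.pos_of_mem_divisors he
  rw [gammaCoeff_eq_tsum_ite_gcd H he₀, Nat.mul_div_cancel' (Nat.dvd_of_mem_divisors he)]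

lemma sum_Icc_neg_eq_of_even {f : ℤ → ℝ} (hf : f.Even) (N : ℕ) :
    ∑ k ∈ Icc (-N : ℤ) N, f k = f 0 + 2 * ∑ l ∈ Icc 1 N, f l := by
  rw [Finset.sum_Icc_of_even_eq_range hf, range_eq_Ico, sum_eq_sum_Ico_succ_bot (by lia),
    two_nsmul]
  simp only [Nat.cast_zero, zero_add, Ico_add_one_right_eq_Icc]
  ring

lemma sum_fejer_dvd {H : ℝ} (hH : 0 ≤ H) {r : ℕ} (hr : 0 < r) :
    ∑ k ∈ Icc (-(⌊H⌋₊ : ℤ)) ⌊H⌋₊, (H - |(k : ℝ)|) * (if (r : ℤ) ∣ k then 1 else 0) =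
      (H ^ 2 + 2 * ∑ d ∈ r.divisors, gammaCoeff H d) / r := by
  have hr' : (r : ℝ) ≠ 0 := by positivity
  have harith (N : ℕ) :
      ∑ i ∈ Icc 1 N, (H - ((r * i : ℕ) : ℝ)) = N * H - r * (N * (N + 1) / 2) := by
    induction N with
    | zero => simp
    | succ n ih => rw [sum_Icc_succ_top (by lia), ih]; push_cast; ring
  have hfloor : H = r * (⌊H / r⌋₊ + Int.fract (H / r)) := by
    rw [natCast_floor_eq_intCast_floor (by positivity), Int.floor_add_fract]
    field_simp
  rw [sum_Icc_neg_eq_of_even (fun k => by simp), sum_divisors_gammaCoeff H hr.ne']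
  simp only [Int.natCast_dvd_natCast, Int.cast_natCast, Nat.abs_cast, mul_ite, mul_one, mul_zero]
  rw [sum_Icc_ite_dvd hr, ← Nat.floor_div_natCast, harith, if_pos (dvd_zero _)]
  generalize Int.fract (H / r) = x at *
  generalize (⌊H / r⌋₊ : ℝ) = N at *
  simp only [Int.cast_zero, abs_zero, sub_zero]
  rw [hfloor]
  field_simp
  ring

/-- The main term `∑_{gcd(d₁, d₂) ∣ k} λ_{d₁} λ_{d₂} / lcm(d₁, d₂)`, the mean value of
`n ↦ (1 * λ)(n) (1 * λ)(n + k)`. -/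
noncomputable def correlationMean (lam : ℕ → ℝ) (D : ℕ) (k : ℤ) : ℝ :=
  pairSum lam D fun d₁ d₂ => (if (Nat.gcd d₁ d₂ : ℤ) ∣ k then 1 else 0) * (1 / Nat.lcm d₁ d₂)

lemma correlationMean_zero (lam : ℕ → ℝ) (D : ℕ) :
    correlationMean lam D 0 = pairSum lam D fun d₁ d₂ => 1 / (Nat.lcm d₁ d₂ : ℝ) := by
  simp [correlationMean]

lemma sum_fejer_mul_correlationMean {H : ℝ} (hH : 0 ≤ H) (lam : ℕ → ℝ) (D : ℕ) :
    ∑ k ∈ Icc (-(⌊H⌋₊ : ℤ)) ⌊H⌋₊, (H - |(k : ℝ)|) * correlationMean lam D k =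
      H ^ 2 * (∑ d ∈ Icc 1 D, lam d / d) ^ 2 +
        2 * ∑ d ∈ Icc 1 D, gammaCoeff H d *
          (∑ m ∈ Icc 1 D, if d ∣ m then lam m / m else 0) ^ 2 := by
  have hpair : ∀ d₁ ∈ Icc 1 D, ∀ d₂ ∈ Icc 1 D,
      ∑ k ∈ Icc (-(⌊H⌋₊ : ℤ)) ⌊H⌋₊, (H - |(k : ℝ)|) *
        ((if (Nat.gcd d₁ d₂ : ℤ) ∣ k then 1 else 0) * (1 / (Nat.lcm d₁ d₂ : ℝ))) =
      H ^ 2 * ((d₁ : ℝ)⁻¹ * (d₂ : ℝ)⁻¹) + 2 * ∑ d ∈ Icc 1 D, gammaCoeff H d *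
        ((if d ∣ d₁ then (d₁ : ℝ)⁻¹ else 0) * (if d ∣ d₂ then (d₂ : ℝ)⁻¹ else 0)) := by
    intro d₁ h₁ d₂ _
    have hgcd : 0 < Nat.gcd d₁ d₂ := Nat.gcd_pos_of_pos_left d₂ (mem_Icc.1 h₁).1
    have hgcd' : (Nat.gcd d₁ d₂ : ℝ) ≠ 0 := by positivity
    simp only [← mul_assoc, ← sum_mul]
    rw [sum_fejer_dvd hH hgcd, one_div_lcm, div_mul_div_cancel₀ hgcd', sum_divisors_gcd h₁]
    have hite (d : ℕ) : gammaCoeff H d * (if d ∣ d₁ then (d₁ : ℝ)⁻¹ else 0) *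
        (if d ∣ d₂ then (d₂ : ℝ)⁻¹ else 0) =
          (if d ∣ d₁ ∧ d ∣ d₂ then gammaCoeff H d else 0) / ((d₁ : ℝ) * d₂) := by
      by_cases hd₁ : d ∣ d₁ <;> by_cases hd₂ : d ∣ d₂ <;> simp [hd₁, hd₂, div_eq_mul_inv]; ring
    simp only [hite, ← sum_div]
    ring
  simp only [correlationMean, ← pairSum_const_mul, ← pairSum_sum]
  rw [pairSum_congr hpair, pairSum_add, pairSum_const_mul, pairSum_const_mul, pairSum_sum]
  simp only [pairSum_const_mul, pairSum_mul, ← sq]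
  simp only [mul_ite, mul_zero, div_eq_mul_inv]

/-! ### Second moments of the divisor sums -/

lemma sum_divisorSum_sq (hsupp : ∀ d, D < d → lam d = 0) (N : ℕ) :
    ∑ n ∈ Icc 1 N, divisorSum lam n ^ 2 =
      pairSum lam D fun d₁ d₂ => ((N / Nat.lcm d₁ d₂ : ℕ) : ℝ) := by
  have hsq : ∀ n ∈ Icc 1 N, divisorSum lam n ^ 2 =
      pairSum lam D fun d₁ d₂ => if Nat.lcm d₁ d₂ ∣ n then 1 else 0 := by
    intro n hn
    have hn₀ : n ≠ 0 := Nat.one_le_iff_ne_zero.1 (mem_Icc.1 hn).1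
    simp only [sq, divisorSum_mul_divisorSum hsupp hn₀ hn₀, Nat.lcm_dvd_iff, ite_and,
      ite_mul, one_mul, zero_mul]
  rw [sum_congr rfl hsq, ← pairSum_sum]
  refine pairSum_congr fun d₁ h₁ d₂ h₂ => ?_
  rw [sum_Icc_ite_dvd (Nat.lcm_pos (mem_Icc.1 h₁).1 (mem_Icc.1 h₂).1)]
  simp

lemma abs_sum_divisorSum_sq_sub_le (hlam : ∀ d, |lam d| ≤ 1) (hsupp : ∀ d, D < d → lam d = 0)
    {Y : ℝ} (hY : 0 ≤ Y) :
    |∑ n ∈ Icc 1 ⌊Y⌋₊, divisorSum lam n ^ 2 - Y * correlationMean lam D 0| ≤ (D : ℝ) ^ 2 := by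
  rw [sum_divisorSum_sq hsupp, correlationMean_zero, ← pairSum_const_mul, ← pairSum_sub]
  refine (abs_pairSum_le (Ψ := fun _ _ => 1) hlam fun d₁ _ d₂ _ => ?_).trans (by simp [sq])
  have hquot : 0 ≤ Y / (Nat.lcm d₁ d₂ : ℝ) := by positivity
  rw [← Nat.floor_div_natCast, mul_one_div, abs_sub_le_iff]
  constructor
  · linarith [Nat.floor_le hquot]
  · linarith [Nat.lt_floor_add_one (Y / (Nat.lcm d₁ d₂ : ℝ))]

lemma cast_harmonic_eq_sum_Icc (D : ℕ) : (harmonic D : ℝ) = ∑ d ∈ Icc 1 D, (d : ℝ)⁻¹ := by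
  simp [harmonic_eq_sum_Icc]

lemma cast_harmonic_nonneg (D : ℕ) : (0 : ℝ) ≤ harmonic D := by
  rw [cast_harmonic_eq_sum_Icc]
  positivity

lemma sum_Icc_ite_dvd_inv_le (D : ℕ) {e : ℕ} (he : 0 < e) :
    ∑ d ∈ Icc 1 D, (if e ∣ d then (d : ℝ)⁻¹ else 0) ≤ harmonic D / e := by
  rw [sum_Icc_ite_dvd he, cast_harmonic_eq_sum_Icc, div_eq_mul_inv, mul_comm, mul_sum]
  simp only [Nat.cast_mul, mul_inv]
  exact sum_le_sum_of_subset_of_nonneg (Icc_subset_Icc_right (Nat.div_le_self D e))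
    fun i _ _ => by positivity

/- Bounding `gcd(d₁, d₂)` by the sum of all common divisors `e` separates the variables. -/
lemma sum_one_div_lcm_le (D : ℕ) :
    ∑ d₁ ∈ Icc 1 D, ∑ d₂ ∈ Icc 1 D, 1 / (Nat.lcm d₁ d₂ : ℝ) ≤ harmonic D ^ 3 := by
  have hterm : ∀ d₁ ∈ Icc 1 D, ∀ d₂ ∈ Icc 1 D, 1 / (Nat.lcm d₁ d₂ : ℝ) ≤
      ∑ e ∈ Icc 1 D, (e : ℝ) *
        ((if e ∣ d₁ then (d₁ : ℝ)⁻¹ else 0) * if e ∣ d₂ then (d₂ : ℝ)⁻¹ else 0) := by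
    intro d₁ h₁ d₂ _
    have hite (e : ℕ) : (e : ℝ) *
        ((if e ∣ d₁ then (d₁ : ℝ)⁻¹ else 0) * if e ∣ d₂ then (d₂ : ℝ)⁻¹ else 0) =
          if e ∣ d₁ ∧ e ∣ d₂ then (e : ℝ) / (d₁ * d₂) else 0 := by
      by_cases he₁ : e ∣ d₁ <;> by_cases he₂ : e ∣ d₂ <;> simp [he₁, he₂, div_eq_mul_inv, mul_comm]
    simp only [hite]
    rw [one_div_lcm, ← sum_divisors_gcd h₁]
    exact single_le_sum (f := fun e : ℕ => (e : ℝ) / (d₁ * d₂)) (fun e _ => by positivity)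
      (Nat.mem_divisors_self _ (Nat.gcd_pos_of_pos_left d₂ (mem_Icc.1 h₁).1).ne')
  calc ∑ d₁ ∈ Icc 1 D, ∑ d₂ ∈ Icc 1 D, 1 / (Nat.lcm d₁ d₂ : ℝ)
      ≤ ∑ e ∈ Icc 1 D, (e : ℝ) * (∑ d ∈ Icc 1 D, if e ∣ d then (d : ℝ)⁻¹ else 0) ^ 2 := by
        refine (sum_le_sum fun d₁ h₁ => sum_le_sum (hterm d₁ h₁)).trans_eq ?_
        simp only [sq, sum_mul_sum]
        simp only [mul_sum]
        exact (sum_congr rfl fun d₁ _ => sum_comm).trans sum_comm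
    _ ≤ ∑ e ∈ Icc 1 D, (e : ℝ) * (harmonic D / e) ^ 2 := by
        gcongr with e he
        exact sum_Icc_ite_dvd_inv_le D (mem_Icc.1 he).1
    _ = harmonic D ^ 2 * ∑ e ∈ Icc 1 D, (e : ℝ)⁻¹ := by
        rw [mul_sum]
        refine sum_congr rfl fun e he => ?_
        have he₀ : (e : ℝ) ≠ 0 := by exact_mod_cast Nat.one_le_iff_ne_zero.1 (mem_Icc.1 he).1
        field_simp
    _ = harmonic D ^ 3 := by rw [← cast_harmonic_eq_sum_Icc, ← pow_succ]

lemma sum_divisorSum_sq_le (hlam : ∀ d, |lam d| ≤ 1) (hsupp : ∀ d, D < d → lam d = 0) (N : ℕ) :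
    ∑ n ∈ Icc 1 N, divisorSum lam n ^ 2 ≤ N * harmonic D ^ 3 := by
  rw [sum_divisorSum_sq hsupp]
  calc pairSum lam D (fun d₁ d₂ => ((N / Nat.lcm d₁ d₂ : ℕ) : ℝ))
      ≤ ∑ d₁ ∈ Icc 1 D, ∑ d₂ ∈ Icc 1 D, N * (1 / (Nat.lcm d₁ d₂ : ℝ)) := by
        refine (le_abs_self _).trans (abs_pairSum_le hlam fun d₁ _ d₂ _ => ?_)
        rw [Nat.abs_cast, mul_one_div]
        exact Nat.cast_div_le
    _ ≤ N * harmonic D ^ 3 := by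
        simp only [← mul_sum]
        gcongr
        exact sum_one_div_lcm_le D

/-! ### Poisson summation along arithmetic progressions -/

open scoped FourierTransform in
lemma fourier_comp_mul_left (f : ℝ → ℂ) {c : ℝ} (hc : c ≠ 0) (ξ : ℝ) :
    𝓕 (fun t => f (c * t)) ξ = |c⁻¹| • 𝓕 f (ξ / c) := by
  rw [Real.fourier_real_eq_integral_exp_smul, Real.fourier_real_eq_integral_exp_smul,
    ← Measure.integral_comp_mul_left _ c]
  refine integral_congr_ae (.of_forall fun t => ?_)
  simp only
  congr 4
  field_simp

open scoped FourierTransform SchwartzMap in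
lemma norm_tsum_sub_fourier_zero_le (f : 𝓢(ℝ, ℂ)) {B : ℝ}
    (hB : ∀ n : ℤ, n ≠ 0 → ‖𝓕 (f : ℝ → ℂ) n‖ ≤ B * (1 / (n : ℝ) ^ 2)) (x : ℝ) :
    ‖∑' n : ℤ, f (x + n) - 𝓕 (f : ℝ → ℂ) 0‖ ≤ B * ∑' n : ℤ, 1 / (n : ℝ) ^ 2 := by
  have hsq : Summable fun n : ℤ => B * (1 / (n : ℝ) ^ 2) :=
    (Real.summable_one_div_int_pow.2 one_lt_two).mul_left B
  set F : ℤ → ℂ := fun n => 𝓕 (f : ℝ → ℂ) n * fourier n (x : UnitAddCircle) with hF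
  have hFnorm (n : ℤ) (hn : n ≠ 0) : ‖F n‖ ≤ B * (1 / (n : ℝ) ^ 2) := by
    rw [hF, norm_mul, fourier_apply, Circle.norm_coe, mul_one]
    exact hB n hn
  have hFsum : Summable F := .of_norm_bounded_eventually hsq <|
    (Filter.eventually_cofinite_ne 0).mono hFnorm
  have hpoisson : ∑' n : ℤ, f (x + n) - 𝓕 (f : ℝ → ℂ) 0 = ∑' n, if n = 0 then 0 else F n := by
    rw [SchwartzMap.tsum_eq_tsum_fourier, SchwartzMap.fourier_coe, hFsum.tsum_eq_add_tsum_ite 0,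
      hF]
    simp
  rw [hpoisson, ← tsum_mul_left]
  refine tsum_of_norm_bounded hsq.hasSum fun n => ?_
  split_ifs with hn
  · simp [hn]
  · exact hFnorm n hn

open scoped FourierTransform SchwartzMap in
lemma exists_norm_tsum_sub_integral_le (f : 𝓢(ℝ, ℂ)) (K : ℕ) :
    ∃ C : ℝ, 0 ≤ C ∧ ∀ c : ℝ, 0 < c → ∀ s : ℝ,
      ‖∑' m : ℤ, f (s + c * m) - (1 / c) • ∫ t, f t‖ ≤ C * c ^ (K + 1) := by
  obtain ⟨C, hC₀, hC⟩ := (𝓕 f).decay (K + 2) 0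
  simp only [norm_iteratedFDeriv_zero, SchwartzMap.fourier_coe, Real.norm_eq_abs] at hC
  refine ⟨C * ∑' n : ℤ, 1 / (n : ℝ) ^ 2, mul_nonneg hC₀.le (tsum_nonneg fun n => by positivity),
    fun c hc s => ?_⟩
  set fc : 𝓢(ℝ, ℂ) := SchwartzMap.compCLMOfContinuousLinearEquiv ℂ
    (ContinuousLinearEquiv.unitsEquivAut ℝ (Units.mk0 c hc.ne')) f
  have hfc : (fc : ℝ → ℂ) = fun t => f (c * t) := by
    ext t
    simp [fc, mul_comm]
  have hfourier (ξ : ℝ) : 𝓕 (fc : ℝ → ℂ) ξ = (1 / c) • 𝓕 (f : ℝ → ℂ) (ξ / c) := by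
    rw [hfc, fourier_comp_mul_left _ hc.ne', abs_of_pos (inv_pos.2 hc), one_div]
  have hdecay (n : ℤ) (hn : n ≠ 0) :
      ‖𝓕 (fc : ℝ → ℂ) n‖ ≤ C * c ^ (K + 1) * (1 / (n : ℝ) ^ 2) := by
    have hn₁ : (1 : ℝ) ≤ |(n : ℝ)| := by exact_mod_cast Int.one_le_abs hn
    have : 0 < |(n : ℝ)| := one_pos.trans_le hn₁
    have hfn : ‖𝓕 (f : ℝ → ℂ) (n / c)‖ ≤ C / (|(n : ℝ)| / c) ^ (K + 2) := by
      rw [le_div_iff₀ (by positivity), mul_comm, ← abs_of_pos hc, ← abs_div, abs_of_pos hc]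
      exact hC (n / c)
    rw [hfourier, norm_smul, Real.norm_of_nonneg (by positivity)]
    calc 1 / c * ‖𝓕 (f : ℝ → ℂ) (n / c)‖ ≤ 1 / c * (C / (|(n : ℝ)| / c) ^ (K + 2)) := by gcongr
      _ = C * c ^ (K + 1) * (1 / |(n : ℝ)| ^ (K + 2)) := by
        rw [div_pow, pow_succ c (K + 1)]
        field_simp
      _ ≤ C * c ^ (K + 1) * (1 / |(n : ℝ)| ^ 2) := by gcongr; lia
      _ = C * c ^ (K + 1) * (1 / (n : ℝ) ^ 2) := by rw [sq_abs]
  have hpoisson := norm_tsum_sub_fourier_zero_le fc hdecay (s / c)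
  have hzero : 𝓕 (f : ℝ → ℂ) 0 = ∫ t, f t := by simp [Real.fourier_real_eq_integral_exp_smul]
  simp only [hfourier, zero_div, hzero] at hpoisson
  simpa only [hfc, mul_add, mul_div_cancel₀ s hc.ne', mul_right_comm] using hpoisson

open scoped SchwartzMap in
lemma exists_abs_tsum_sub_integral_le {g : ℝ → ℝ} (hg : ContDiff ℝ (⊤ : ℕ∞) g)
    (hgc : HasCompactSupport g) (K : ℕ) :
    ∃ C : ℝ, 0 ≤ C ∧ ∀ c : ℝ, 0 < c → ∀ s : ℝ,
      |∑' m : ℤ, g (s + c * m) - 1 / c * ∫ t, g t| ≤ C * c ^ (K + 1) := by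
  have hcompact : HasCompactSupport fun t => (g t : ℂ) :=
    hgc.comp_left (g := Complex.ofReal) Complex.ofReal_zero
  set f : 𝓢(ℝ, ℂ) := hcompact.toSchwartzMap (Complex.ofRealCLM.contDiff.comp hg)
  have hf (t : ℝ) : f t = g t := rfl
  obtain ⟨C, hC₀, hC⟩ := exists_norm_tsum_sub_integral_le f K
  refine ⟨C, hC₀, fun c hc s => ?_⟩
  have hcast : ((∑' m : ℤ, g (s + c * m) - 1 / c * ∫ t, g t : ℝ) : ℂ) =
      ∑' m : ℤ, f (s + c * m) - (1 / c) • ∫ t, f t := by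
    simp only [hf, integral_complex_ofReal, Complex.real_smul, Complex.ofReal_sub,
      Complex.ofReal_mul, Complex.ofReal_tsum]
  rw [← Real.norm_eq_abs, ← Complex.norm_real, hcast]
  exact hC c hc s

lemma tsum_int_eq_sum_Icc_add_sum_Icc {F : ℤ → ℝ} {L N : ℕ}
    (hF : ∀ m, F m ≠ 0 → -(L : ℤ) ≤ m ∧ m ≤ N) :
    ∑' m, F m = ∑ m ∈ Icc (-(L : ℤ)) 0, F m + ∑ i ∈ Icc 1 N, F i := by
  have hdisj : Disjoint (Icc (-(L : ℤ)) 0) ((Icc 1 N).map Nat.castEmbedding) := by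
    simp only [disjoint_left, mem_Icc, mem_map, Nat.castEmbedding_apply, not_exists, not_and]
    lia
  rw [tsum_eq_sum (s := Icc (-(L : ℤ)) 0 ∪ (Icc 1 N).map Nat.castEmbedding) fun m hm => ?_,
    sum_union hdisj, sum_map]
  · rfl
  · contrapose! hm
    obtain ⟨hLm, hmN⟩ := hF m hm
    simp only [mem_union, mem_Icc, mem_map, Nat.castEmbedding_apply]
    rcases le_or_gt m 0 with hm₀ | hm₀
    · exact .inl ⟨hLm, hm₀⟩
    · exact .inr ⟨m.toNat, by lia, by lia⟩

lemma mem_range_of_comp_progression_ne_zero {g : ℝ → ℝ} {a b X H s : ℝ} {d M : ℕ} {m : ℤ}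
    (ha : 0 ≤ a) (hsupp : ∀ t, g t ≠ 0 → t ∈ Set.Icc a b) (hX : 0 < X) (hs : s ∈ Set.Icc 0 H)
    (hd : 0 < d) (hM : b * X ≤ M) (hm : g ((s + d * m) / X) ≠ 0) :
    -(⌊H / d⌋₊ : ℤ) ≤ m ∧ m ≤ (M / d : ℕ) := by
  have hH : 0 ≤ H := hs.1.trans hs.2
  obtain ⟨hlower, hupper⟩ := hsupp _ hm
  rw [le_div_iff₀ hX] at hlower
  rw [div_le_iff₀ hX] at hupper
  constructor
  · rw [neg_le, Int.natCast_floor_eq_floor (by positivity), Int.le_floor,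
      le_div_iff₀ (Nat.cast_pos.2 hd)]
    push_cast
    linarith [mul_nonneg ha hX.le, hs.2]
  · rw [Int.natCast_ediv, Int.le_ediv_iff_mul_le (by exact_mod_cast hd)]
    have : (m * d : ℝ) ≤ M := by linarith [hs.1]
    exact_mod_cast this

lemma abs_comp_progression_le_of_nonpos {g : ℝ → ℝ} {a b B X H s : ℝ} {d : ℕ} {m : ℤ}
    (ha : 0 < a) (hsupp : ∀ t, g t ≠ 0 → t ∈ Set.Icc a b) (hB : ∀ t, |g t| ≤ B) (hX : 0 < X)
    (hs : s ∈ Set.Icc 0 H) (hm : m ≤ 0) : |g ((s + d * m) / X)| ≤ B * (H / (a * X)) := by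
  have hH : 0 ≤ H := hs.1.trans hs.2
  have hB₀ : 0 ≤ B := (abs_nonneg _).trans (hB 0)
  rcases eq_or_ne (g ((s + d * m) / X)) 0 with hzero | hne
  · rw [hzero, abs_zero]
    positivity
  · have hlower := (le_div_iff₀ hX).1 (hsupp _ hne).1
    have hm' : (d : ℝ) * m ≤ 0 :=
      mul_nonpos_of_nonneg_of_nonpos d.cast_nonneg (Int.cast_nonpos.2 hm)
    have hone : 1 ≤ H / (a * X) := by
      rw [le_div_iff₀ (by positivity)]
      linarith [hs.2]
    exact (hB _).trans (le_mul_of_one_le_right hB₀ hone)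

lemma abs_sum_dvd_sub_tsum_le {g : ℝ → ℝ} {a b B X H s : ℝ} {d M : ℕ} (ha : 0 < a)
    (hsupp : ∀ t, g t ≠ 0 → t ∈ Set.Icc a b) (hB : ∀ t, |g t| ≤ B) (hX : 0 < X)
    (hs : s ∈ Set.Icc 0 H) (hd : 0 < d) (hM : b * X ≤ M) :
    |∑ n ∈ Icc 1 M, (if d ∣ n then g ((n + s) / X) else 0) - ∑' m : ℤ, g (s / X + d / X * m)|
      ≤ B * ((H / d + 1) * (H / (a * X))) := by
  have hH : 0 ≤ H := hs.1.trans hs.2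
  have hB₀ : 0 ≤ B := (abs_nonneg _).trans (hB 0)
  set F : ℤ → ℝ := fun m => g ((s + d * m) / X)
  have hprogression : ∑ n ∈ Icc 1 M, (if d ∣ n then g ((n + s) / X) else 0) =
      ∑ i ∈ Icc 1 (M / d), F i := by
    rw [sum_Icc_ite_dvd hd]
    simp only [F, Nat.cast_mul, Int.cast_natCast, add_comm]
  have hF (m : ℤ) : g (s / X + d / X * m) = F m := by
    simp only [F, add_div, div_mul_eq_mul_div]
  have hnonpos : ∀ m ∈ Icc (-(⌊H / d⌋₊ : ℤ)) 0, |F m| ≤ B * (H / (a * X)) := fun m hm =>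
    abs_comp_progression_le_of_nonpos ha hsupp hB hX hs (mem_Icc.1 hm).2
  simp only [hF]
  rw [hprogression, tsum_int_eq_sum_Icc_add_sum_Icc fun m hm =>
    mem_range_of_comp_progression_ne_zero ha.le hsupp hX hs hd hM hm, sub_add_cancel_right, abs_neg]
  calc |∑ m ∈ Icc (-(⌊H / d⌋₊ : ℤ)) 0, F m|
      ≤ (⌊H / d⌋₊ + 1) * (B * (H / (a * X))) := by
        refine ((abs_sum_le_sum_abs _ _).trans (sum_le_card_nsmul _ _ _ hnonpos)).trans_eq ?_
        rw [Int.card_Icc, nsmul_eq_mul, show (0 + 1 - -(⌊H / d⌋₊ : ℤ)).toNat = ⌊H / d⌋₊ + 1 by lia]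
        push_cast
        rfl
    _ ≤ (H / d + 1) * (B * (H / (a * X))) := by
        gcongr
        exact Nat.floor_le (by positivity)
    _ = B * ((H / d + 1) * (H / (a * X))) := by ring

lemma abs_sum_dvd_integral_sub_le {g : ℝ → ℝ} {a b B C X H : ℝ} {d M : ℕ} (hg : Continuous g)
    (ha : 0 < a) (hsupp : ∀ t, g t ≠ 0 → t ∈ Set.Icc a b) (hB : ∀ t, |g t| ≤ B)
    (hC : ∀ s, |∑' m : ℤ, g (s + d / X * m) - 1 / (d / X) * ∫ t, g t| ≤ C)
    (hX : 0 < X) (hH : 0 ≤ H) (hd : 0 < d) (hM : b * X ≤ M) :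
    |∑ n ∈ Icc 1 M, (if d ∣ n then ∫ y in (n : ℝ)..(n + H), g (y / X) else 0) -
      H * (X * ∫ t, g t) / d| ≤ H * (C + B * ((H / d + 1) * (H / (a * X)))) := by
  have hsum : ∑ n ∈ Icc 1 M, (if d ∣ n then ∫ y in (n : ℝ)..(n + H), g (y / X) else 0) =
      ∫ s in (0 : ℝ)..H, ∑ n ∈ Icc 1 M, if d ∣ n then g ((n + s) / X) else 0 := by
    rw [intervalIntegral.integral_finsetSum fun n _ => ?_]
    · refine sum_congr rfl fun n _ => ?_
      split_ifs
      · rw [intervalIntegral.integral_comp_add_left (fun y => g (y / X)) (n : ℝ), add_zero]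
      · simp
    · refine Continuous.intervalIntegrable ?_ 0 H
      split_ifs <;> fun_prop
  have hmean : H * (X * ∫ t, g t) / d = ∫ _ in (0 : ℝ)..H, 1 / ((d : ℝ) / X) * ∫ t, g t := by
    rw [intervalIntegral.integral_const, smul_eq_mul, one_div_div, sub_zero]
    ring
  have hcont : Continuous fun s : ℝ => ∑ n ∈ Icc 1 M, if d ∣ n then g ((n + s) / X) else 0 :=
    continuous_finsetSum _ fun n _ => by split_ifs <;> fun_prop
  rw [hsum, hmean, ← intervalIntegral.integral_sub (hcont.intervalIntegrable 0 H)
    intervalIntegrable_const, mul_comm H, ← Real.norm_eq_abs]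
  refine (intervalIntegral.norm_integral_le_of_norm_le_const fun s hs => ?_).trans_eq
    (by rw [sub_zero, abs_of_nonneg hH])
  rw [Set.uIoc_of_le hH] at hs
  rw [Real.norm_eq_abs, add_comm C]
  exact (abs_sub_le _ _ _).trans (add_le_add
    (abs_sum_dvd_sub_tsum_le ha hsupp hB hX ⟨hs.1.le, hs.2⟩ hd hM) (hC (s / X)))

/-! ### Overlapping short intervals -/

lemma integral_mul_sum_indicator_sub_sq {α ι : Type*} [MeasurableSpace α] {μ : Measure α}
    {f : α → ℝ} (hf : Integrable f μ) {I : ι → Set α} (hI : ∀ i, MeasurableSet (I i))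
    (s : Finset ι) (c : ι → ℝ) (E : ℝ) :
    ∫ y, f y * (∑ i ∈ s, c i * (I i).indicator 1 y - E) ^ 2 ∂μ =
      ∑ i ∈ s, ∑ j ∈ s, c i * c j * ∫ y in I i ∩ I j, f y ∂μ -
        2 * E * ∑ i ∈ s, c i * ∫ y in I i, f y ∂μ + E ^ 2 * ∫ y, f y ∂μ := by
  have hexpand (y : α) : f y * (∑ i ∈ s, c i * (I i).indicator 1 y - E) ^ 2 =
      ∑ i ∈ s, ∑ j ∈ s, c i * c j * (I i ∩ I j).indicator f y -
        2 * E * ∑ i ∈ s, c i * (I i).indicator f y + E ^ 2 * f y := by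
    have hone (i : ι) : (I i).indicator f y = f y * (I i).indicator 1 y := by
      rw [← Set.indicator_mul_right, Pi.one_def]
      simp only [mul_one]
    have htwo (i j : ι) : (I i ∩ I j).indicator f y =
        f y * ((I i).indicator 1 y * (I j).indicator 1 y) := by
      rw [Set.inter_comm, ← Set.indicator_indicator, ← mul_assoc, ← hone]
      by_cases hy : y ∈ I j <;> simp [hy]
    have hsingle : ∑ i ∈ s, c i * (f y * (I i).indicator 1 y) =
        f y * ∑ i ∈ s, c i * (I i).indicator 1 y := by
      simp only [mul_sum, mul_left_comm]
    have hdouble : ∑ i ∈ s, ∑ j ∈ s, c i * c j * (f y * ((I i).indicator 1 y *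
        (I j).indicator 1 y)) = f y * (∑ i ∈ s, c i * (I i).indicator 1 y) ^ 2 := by
      rw [sq, sum_mul_sum]
      simp only [mul_sum]
      exact sum_congr rfl fun i _ => sum_congr rfl fun j _ => by ring
    simp only [hone, htwo]
    rw [hsingle, hdouble]
    ring
  have hint₁ (i : ι) : Integrable (fun y => c i * (I i).indicator f y) μ :=
    (hf.indicator (hI i)).const_mul _
  have hint₂ (i j : ι) : Integrable (fun y => c i * c j * (I i ∩ I j).indicator f y) μ :=
    (hf.indicator ((hI i).inter (hI j))).const_mul _
  have hsum₁ := (integrable_finsetSum s fun i _ => hint₁ i).const_mul (2 * E)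
  have hsum₂ := integrable_finsetSum s fun i _ => integrable_finsetSum s fun j _ => hint₂ i j
  have hdiff : Integrable (fun y => ∑ i ∈ s, ∑ j ∈ s, c i * c j * (I i ∩ I j).indicator f y -
      2 * E * ∑ i ∈ s, c i * (I i).indicator f y) μ := hsum₂.sub hsum₁
  simp only [hexpand]
  rw [integral_add hdiff (hf.const_mul _), integral_sub hsum₂ hsum₁,
    integral_const_mul, integral_const_mul, integral_finsetSum _ fun i _ => hint₁ i,
    integral_finsetSum _ fun i _ => integrable_finsetSum s fun j _ => hint₂ i j]
  simp only [integral_finsetSum s fun j _ => hint₂ _ j, integral_const_mul,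
    integral_indicator (hI _), integral_indicator ((hI _).inter (hI _))]

lemma volume_real_Ico_inter_Ico (H u v : ℝ) :
    volume.real (Set.Ico u (u + H) ∩ Set.Ico v (v + H)) = max (H - |u - v|) 0 := by
  rw [Set.Ico_inter_Ico, Real.volume_real_Ico, min_add_add_right, ← max_sub_min_eq_abs']
  congr 1
  ring

lemma abs_setIntegral_Ico_inter_Ico_sub_le {f : ℝ → ℝ} (hf : Integrable f) {H u ε : ℝ}
    (hε : ∀ y ∈ Set.Ico u (u + H), |f y - f u| ≤ ε) (v : ℝ) :
    |(∫ y in Set.Ico u (u + H) ∩ Set.Ico v (v + H), f y) - max (H - |u - v|) 0 * f u| ≤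
      max (H - |u - v|) 0 * ε := by
  have hfinite : volume (Set.Ico u (u + H) ∩ Set.Ico v (v + H)) < ⊤ := by
    rw [Set.Ico_inter_Ico]
    exact measure_Ico_lt_top
  rw [← volume_real_Ico_inter_Ico, ← smul_eq_mul, ← setIntegral_const,
    ← integral_sub hf.integrableOn (integrableOn_const hfinite.ne), mul_comm]
  exact norm_setIntegral_le_of_norm_le_const (f := fun y => f y - f u) hfinite
    fun y hy => hε y hy.1

lemma abs_sum_mul_mul_le_of_row_sum_le {ι : Type*} {s : Finset ι} {J w : ι → ι → ℝ} {R : ℝ}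
    (hJ : ∀ i j, |J i j| ≤ w i j) (hw : ∀ i j, w i j = w j i)
    (hR : ∀ i, ∑ j ∈ s, w i j ≤ R) (c : ι → ℝ) :
    |∑ i ∈ s, ∑ j ∈ s, c i * c j * J i j| ≤ R * ∑ i ∈ s, c i ^ 2 := by
  have hrow : ∑ i ∈ s, ∑ j ∈ s, c i ^ 2 * w i j ≤ R * ∑ i ∈ s, c i ^ 2 := by
    simp only [← mul_sum]
    rw [mul_sum]
    refine sum_le_sum fun i _ => ?_
    rw [mul_comm R]
    gcongr
    exact hR i
  have hcol : ∑ i ∈ s, ∑ j ∈ s, c j ^ 2 * w i j = ∑ i ∈ s, ∑ j ∈ s, c i ^ 2 * w i j := by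
    rw [sum_comm]
    simp only [hw]
  have hterm (i j : ι) : |c i * c j * J i j| ≤ (c i ^ 2 * w i j + c j ^ 2 * w i j) / 2 := by
    have hprod : |c i * c j| ≤ (c i ^ 2 + c j ^ 2) / 2 := by
      rw [abs_mul, ← sq_abs (c i), ← sq_abs (c j)]
      linarith [two_mul_le_add_sq |c i| |c j|]
    calc |c i * c j * J i j| = |c i * c j| * |J i j| := abs_mul _ _
      _ ≤ (c i ^ 2 + c j ^ 2) / 2 * w i j := by gcongr; exact hJ i j
      _ = (c i ^ 2 * w i j + c j ^ 2 * w i j) / 2 := by ring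
  calc |∑ i ∈ s, ∑ j ∈ s, c i * c j * J i j|
      ≤ ∑ i ∈ s, ∑ j ∈ s, (c i ^ 2 * w i j + c j ^ 2 * w i j) / 2 :=
        (abs_sum_le_sum_abs _ _).trans <| sum_le_sum fun i _ =>
          (abs_sum_le_sum_abs _ _).trans <| sum_le_sum fun j _ => hterm i j
    _ = ∑ i ∈ s, ∑ j ∈ s, c i ^ 2 * w i j := by
        simp only [← sum_div, sum_add_distrib]
        rw [hcol, add_self_div_two]
    _ ≤ R * ∑ i ∈ s, c i ^ 2 := hrow

lemma mem_Icc_neg_floor_iff {H : ℝ} (hH : 0 ≤ H) (k : ℤ) :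
    k ∈ Icc (-(⌊H⌋₊ : ℤ)) ⌊H⌋₊ ↔ |(k : ℝ)| ≤ H := by
  rw [mem_Icc, ← abs_le, Int.natCast_floor_eq_floor hH, Int.le_floor, Int.cast_abs]

lemma max_sub_abs_eq_sum {H : ℝ} (hH : 0 ≤ H) (n₁ n₂ : ℕ) :
    max (H - |(n₁ : ℝ) - n₂|) 0 =
      ∑ k ∈ Icc (-(⌊H⌋₊ : ℤ)) ⌊H⌋₊, if (n₁ : ℤ) = n₂ + k then H - |(k : ℝ)| else 0 := by
  simp only [← sub_eq_iff_eq_add', sum_ite_eq, mem_Icc_neg_floor_iff hH]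
  push_cast
  split_ifs with h
  · exact max_eq_left (sub_nonneg.2 h)
  · exact max_eq_right (sub_nonpos.2 (not_le.1 h).le)

lemma sum_max_sub_abs_le {H : ℝ} (hH : 1 ≤ H) (n : ℕ) (s : Finset ℕ) :
    ∑ m ∈ s, max (H - |(n : ℝ) - m|) 0 ≤ 3 * H ^ 2 := by
  have hH₀ : 0 ≤ H := by linarith
  have hfiber (k : ℤ) : ∑ m ∈ s, (if (n : ℤ) = m + k then H - |(k : ℝ)| else 0) ≤ H := by
    rcases le_or_gt (|(k : ℝ)|) H with hk | hk
    · calc ∑ m ∈ s, (if (n : ℤ) = m + k then H - |(k : ℝ)| else 0)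
          ≤ ∑ _m ∈ {((n : ℤ) - k).toNat}, (H - |(k : ℝ)|) := by
            rw [← sum_filter]
            refine sum_le_sum_of_subset_of_nonneg (fun m hm => ?_) fun _ _ _ => sub_nonneg.2 hk
            have hmk := (mem_filter.1 hm).2
            rw [mem_singleton]
            lia
        _ ≤ H := by
            rw [sum_singleton]
            linarith [abs_nonneg (k : ℝ)]
    · exact (sum_nonpos fun m _ => by split_ifs <;> linarith).trans hH₀
  simp only [max_sub_abs_eq_sum hH₀]
  rw [sum_comm]
  calc _ ≤ ∑ _k ∈ Icc (-(⌊H⌋₊ : ℤ)) ⌊H⌋₊, H := sum_le_sum fun k _ => hfiber k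
    _ = (2 * ⌊H⌋₊ + 1) * H := by
      rw [sum_const, Int.card_Icc, nsmul_eq_mul,
        show ((⌊H⌋₊ : ℤ) + 1 - -(⌊H⌋₊ : ℤ)).toNat = 2 * ⌊H⌋₊ + 1 by lia]
      push_cast
      rfl
    _ ≤ 3 * H ^ 2 := by nlinarith [Nat.floor_le hH₀]

/-! ### Unfolding the infinite sums -/

lemma tsum_ite_eq_sum {ι : Type*} {p : ι → Prop} [DecidablePred p] {s : Finset ι}
    (hp : ∀ i, p i ↔ i ∈ s) (f : ι → ℝ) :
    ∑' i, (if p i then f i else 0) = ∑ i ∈ s, f i := by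
  rw [tsum_eq_sum (s := s) fun i hi => if_neg (mt (hp i).1 hi)]
  exact sum_congr rfl fun i hi => if_pos ((hp i).2 hi)

lemma tsum_ite_le_eq_sum_Icc_floor (Y : ℝ) (f : ℕ → ℝ) :
    ∑' n : ℕ, (if 1 ≤ n ∧ (n : ℝ) ≤ Y then f n else 0) = ∑ n ∈ Icc 1 ⌊Y⌋₊, f n := by
  refine tsum_ite_eq_sum (fun n => ?_) f
  rw [mem_Icc]
  exact and_congr_right fun hn => (Nat.le_floor_iff' (Nat.one_le_iff_ne_zero.1 hn)).symm

lemma tsum_ite_abs_le_eq_sum_sub {H : ℝ} (hH : 0 ≤ H) (f : ℤ → ℝ) :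
    ∑' k : ℤ, (if k ≠ 0 ∧ |(k : ℝ)| ≤ H then f k else 0) =
      ∑ k ∈ Icc (-(⌊H⌋₊ : ℤ)) ⌊H⌋₊, f k - f 0 := by
  have hzero : (0 : ℤ) ∈ Icc (-(⌊H⌋₊ : ℤ)) ⌊H⌋₊ := by
    rw [mem_Icc_neg_floor_iff hH]
    simpa using hH
  rw [← sum_erase_eq_sub hzero]
  exact tsum_ite_eq_sum (fun k => by rw [mem_erase, mem_Icc_neg_floor_iff hH]) f

lemma tsum_ite_mul_eq_sum_ite_dvd {d M : ℕ} (hd : 0 < d) {f : ℕ → ℝ}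
    (hf : ∀ n, M < n → f n = 0) :
    ∑' m : ℕ, (if 1 ≤ m then f (d * m) else 0) = ∑ n ∈ Icc 1 M, if d ∣ n then f n else 0 := by
  rw [sum_Icc_ite_dvd hd, ← tsum_ite_eq_sum (p := fun m => 1 ≤ m ∧ m ≤ M / d) fun m => mem_Icc.symm]
  refine tsum_congr fun m => ?_
  rw [ite_and]
  refine if_ctx_congr Iff.rfl (fun _ => ?_) fun _ => rfl
  rw [eq_comm, ite_eq_left_iff, Nat.le_div_iff_mul_le hd, mul_comm, not_le]
  exact fun hm => (hf _ hm).symm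

lemma tsum_ite_one_le_eq_sum_Icc {M : ℕ} {f : ℕ → ℝ} (hf : ∀ n, M < n → f n = 0) :
    ∑' n : ℕ, (if 1 ≤ n then f n else 0) = ∑ n ∈ Icc 1 M, f n := by
  simpa only [one_mul, one_dvd, if_true] using tsum_ite_mul_eq_sum_ite_dvd one_pos hf

/-- The type I sum `∑_{y - H < d m ≤ y} λ_d` over a short interval. -/
noncomputable def typeISum (lam : ℕ → ℝ) (H y : ℝ) : ℝ :=
  ∑' d : ℕ, ∑' m : ℕ, if 1 ≤ d ∧ 1 ≤ m ∧
    y - H < (d * m : ℕ) ∧ ((d * m : ℕ) : ℝ) ≤ y then lam d else 0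

lemma typeISum_eq_sum_indicator (hsupp : ∀ d, D < d → lam d = 0) {M : ℕ} {y : ℝ} (hy : y ≤ M)
    (H : ℝ) :
    typeISum lam H y =
      ∑ n ∈ Icc 1 M, divisorSum lam n * (Set.Ico (n : ℝ) (n + H)).indicator 1 y := by
  set χ : ℕ → ℝ := fun n => (Set.Ico (n : ℝ) (n + H)).indicator 1 y with hχ
  have hχ_eq (n : ℕ) : χ n = if y - H < n ∧ (n : ℝ) ≤ y then 1 else 0 := by
    simp only [hχ, Set.indicator_apply, Set.mem_Ico, Pi.one_apply, sub_lt_iff_lt_add, and_comm]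
  have hχ_zero (n : ℕ) (hn : M < n) : χ n = 0 := by
    rw [hχ_eq, if_neg fun h => absurd (h.2.trans hy) (not_le.2 (by exact_mod_cast hn))]
  have hinner (d : ℕ) : (∑' m : ℕ, if 1 ≤ d ∧ 1 ≤ m ∧
      y - H < (d * m : ℕ) ∧ ((d * m : ℕ) : ℝ) ≤ y then lam d else 0) =
        if d ∈ Icc 1 D then ∑ n ∈ Icc 1 M, lam d * ((if d ∣ n then 1 else 0) * χ n) else 0 := by
    by_cases hd : d ∈ Icc 1 D
    · have hd₁ := (mem_Icc.1 hd).1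
      simp only [hd, if_true, ite_mul, one_mul, zero_mul, mul_ite, mul_zero]
      rw [← tsum_ite_mul_eq_sum_ite_dvd (f := fun n => lam d * χ n) hd₁ fun n hn => by
        rw [hχ_zero n hn, mul_zero]]
      simp only [hχ_eq, hd₁, true_and, ite_and, mul_ite, mul_one, mul_zero]
    · have hzero : 1 ≤ d → lam d = 0 := fun hd₁ =>
        hsupp d (not_le.1 fun hdD => hd (mem_Icc.2 ⟨hd₁, hdD⟩))
      simp +contextual [hd, hzero]
  simp only [typeISum, hinner]
  rw [tsum_ite_eq_sum fun d => Iff.rfl, sum_comm]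
  refine sum_congr rfl fun n hn => ?_
  rw [divisorSum_eq_sum_Icc hsupp (Nat.one_le_iff_ne_zero.1 (mem_Icc.1 hn).1), sum_mul]
  simp only [mul_assoc, hχ]

/-- The shifted correlation `∑_{d₁ m₁ = d₂ m₂ + k} G(d₁ m₁)` of the multiples of `d₁` and `d₂`. -/
noncomputable def dilatedCorrelation (G : ℕ → ℝ) (d₁ d₂ : ℕ) (k : ℤ) : ℝ :=
  ∑' m₁ : ℕ, ∑' m₂ : ℕ,
    if 1 ≤ m₁ ∧ 1 ≤ m₂ ∧ ((d₁ * m₁ : ℕ) : ℤ) = (d₂ * m₂ : ℕ) + k then G (d₁ * m₁) else 0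

lemma dilatedCorrelation_eq_zero (G : ℕ → ℝ) {d₁ d₂ : ℕ} {k : ℤ}
    (hk : ¬ (Nat.gcd d₁ d₂ : ℤ) ∣ k) : dilatedCorrelation G d₁ d₂ k = 0 := by
  have hne (m₁ m₂ : ℕ) : ((d₁ * m₁ : ℕ) : ℤ) ≠ (d₂ * m₂ : ℕ) + k := by
    intro h
    rw [← sub_eq_iff_eq_add'] at h
    refine hk (h ▸ dvd_sub ?_ ?_) <;> rw [Int.natCast_dvd_natCast]
    · exact dvd_mul_of_dvd_left (Nat.gcd_dvd_left d₁ d₂) m₁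
    · exact dvd_mul_of_dvd_left (Nat.gcd_dvd_right d₁ d₂) m₂
  simp only [dilatedCorrelation, hne, and_false, if_false, tsum_zero]

lemma dilatedCorrelation_eq_sum {G : ℕ → ℝ} {d₁ d₂ M : ℕ} {k : ℤ} (hd₁ : 0 < d₁) (hd₂ : 0 < d₂)
    (hG : ∀ n, M < n + k.natAbs → G n = 0) :
    dilatedCorrelation G d₁ d₂ k = ∑ n₁ ∈ Icc 1 M, ∑ n₂ ∈ Icc 1 M,
      (if (n₁ : ℤ) = n₂ + k then G n₁ else 0) *
        ((if d₁ ∣ n₁ then 1 else 0) * if d₂ ∣ n₂ then 1 else 0) := by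
  have hinner (n₁ : ℕ) : (∑' m₂ : ℕ, if 1 ≤ m₂ then
      (if (n₁ : ℤ) = (d₂ * m₂ : ℕ) + k then G n₁ else 0) else 0) =
        ∑ n₂ ∈ Icc 1 M, if d₂ ∣ n₂ then (if (n₁ : ℤ) = n₂ + k then G n₁ else 0) else 0 :=
    tsum_ite_mul_eq_sum_ite_dvd (f := fun n₂ => if (n₁ : ℤ) = n₂ + k then G n₁ else 0) hd₂
      fun n₂ hn₂ => ite_eq_right_iff.2 fun h => hG n₁ (by lia)
  have houter (m₁ : ℕ) : (∑' m₂ : ℕ, if 1 ≤ m₁ ∧ 1 ≤ m₂ ∧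
      ((d₁ * m₁ : ℕ) : ℤ) = (d₂ * m₂ : ℕ) + k then G (d₁ * m₁) else 0) =
        if 1 ≤ m₁ then ∑ n₂ ∈ Icc 1 M, (if d₂ ∣ n₂ then
          (if ((d₁ * m₁ : ℕ) : ℤ) = n₂ + k then G (d₁ * m₁) else 0) else 0) else 0 := by
    split_ifs with hm₁
    · simp only [hm₁, true_and, ite_and, hinner]
    · simp only [hm₁, false_and, if_false, tsum_zero]
  simp only [dilatedCorrelation, houter]
  rw [tsum_ite_mul_eq_sum_ite_dvd (f := fun n₁ => ∑ n₂ ∈ Icc 1 M, if d₂ ∣ n₂ then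
    (if (n₁ : ℤ) = n₂ + k then G n₁ else 0) else 0) hd₁ fun n hn => ?_]
  · refine sum_congr rfl fun n₁ _ => ?_
    by_cases hn₁ : d₁ ∣ n₁ <;> simp [hn₁]
  · simp [hG n (by lia)]

lemma pairSum_dilatedCorrelation (hsupp : ∀ d, D < d → lam d = 0) {G : ℕ → ℝ} {M : ℕ} {k : ℤ}
    (hG : ∀ n, M < n + k.natAbs → G n = 0) :
    pairSum lam D (fun d₁ d₂ => dilatedCorrelation G d₁ d₂ k) =
      ∑ n₁ ∈ Icc 1 M, ∑ n₂ ∈ Icc 1 M,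
        (if (n₁ : ℤ) = n₂ + k then G n₁ else 0) * (divisorSum lam n₁ * divisorSum lam n₂) := by
  rw [pairSum_congr fun d₁ h₁ d₂ h₂ =>
    dilatedCorrelation_eq_sum (mem_Icc.1 h₁).1 (mem_Icc.1 h₂).1 hG]
  simp only [pairSum_sum, pairSum_const_mul]
  refine sum_congr rfl fun n₁ h₁ => sum_congr rfl fun n₂ h₂ => ?_
  rw [divisorSum_mul_divisorSum hsupp (Nat.one_le_iff_ne_zero.1 (mem_Icc.1 h₁).1)
    (Nat.one_le_iff_ne_zero.1 (mem_Icc.1 h₂).1)]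

/-! ### The terms of the expansion -/

/-- The term `S₁`: the part of the Fejér sum of the mean correlations that is not cancelled by the
square of the expected value. -/
noncomputable def diagonalTerm (g : ℝ → ℝ) (lam : ℕ → ℝ) (X H D₀ : ℝ) : ℝ :=
  2 * (∫ t : ℝ, g t) * X * ∑' d : ℕ, if 1 ≤ d ∧ (d : ℝ) ≤ D₀ then
    gammaCoeff H d * (∑' m : ℕ, if 1 ≤ m ∧ (m : ℝ) ≤ D₀ ∧ d ∣ m then lam m / m else 0) ^ 2 else 0

/-- The term `S₂`: the Fejér-weighted deviations of the shifted correlations from their mean values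
over the nonzero shifts. -/
noncomputable def offDiagonalTerm (g : ℝ → ℝ) (lam : ℕ → ℝ) (X H D₀ : ℝ) : ℝ :=
  ∑' k : ℤ, if k ≠ 0 ∧ |(k : ℝ)| ≤ H then
    (H - |(k : ℝ)|) * ∑' d₁ : ℕ, ∑' d₂ : ℕ,
      if 1 ≤ d₁ ∧ 1 ≤ d₂ ∧ (d₁ : ℝ) ≤ D₀ ∧ (d₂ : ℝ) ≤ D₀ ∧ ((Nat.gcd d₁ d₂ : ℤ) ∣ k) then
        lam d₁ * lam d₂ * (dilatedCorrelation (fun n => g ((n : ℝ) / X)) d₁ d₂ k -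
          (∫ t : ℝ, g t) * X / (Nat.lcm d₁ d₂ : ℝ))
      else 0
  else 0

/-- The term `S₃`: the deviation of the smoothed second moment of `1 * λ` from its mean value, where
the average over `n ≤ X ^ 10` stands in for the exact mean. -/
noncomputable def secondMomentTerm (g : ℝ → ℝ) (lam : ℕ → ℝ) (X H : ℝ) : ℝ :=
  H * (∑' n : ℕ, if 1 ≤ n then g ((n : ℝ) / X) * divisorSum lam n ^ 2 else 0) -
    (∫ t : ℝ, g t) * H * X / X ^ (10 : ℕ) *
      ∑ n ∈ Icc 1 ⌊X ^ (10 : ℕ)⌋₊, divisorSum lam n ^ 2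

lemma diagonalTerm_eq_sum (g : ℝ → ℝ) (lam : ℕ → ℝ) (X H D₀ : ℝ) :
    diagonalTerm g lam X H D₀ = 2 * (∫ t : ℝ, g t) * X * ∑ d ∈ Icc 1 ⌊D₀⌋₊,
      gammaCoeff H d * (∑ m ∈ Icc 1 ⌊D₀⌋₊, if d ∣ m then lam m / m else 0) ^ 2 := by
  have hinner (d : ℕ) : (∑' m : ℕ, if 1 ≤ m ∧ (m : ℝ) ≤ D₀ ∧ d ∣ m then lam m / m else 0) =
      ∑ m ∈ Icc 1 ⌊D₀⌋₊, if d ∣ m then lam m / m else 0 := by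
    rw [← tsum_ite_le_eq_sum_Icc_floor]
    simp only [← and_assoc, ite_and _ (d ∣ _)]
  rw [diagonalTerm, tsum_ite_le_eq_sum_Icc_floor]
  simp only [hinner]

lemma tsum_tsum_ite_gcd_dvd_eq_pairSum (lam : ℕ → ℝ) (D₀ : ℝ) (k : ℤ) (Φ : ℕ → ℕ → ℝ) :
    (∑' d₁ : ℕ, ∑' d₂ : ℕ,
      if 1 ≤ d₁ ∧ 1 ≤ d₂ ∧ (d₁ : ℝ) ≤ D₀ ∧ (d₂ : ℝ) ≤ D₀ ∧ ((Nat.gcd d₁ d₂ : ℤ) ∣ k) then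
        lam d₁ * lam d₂ * Φ d₁ d₂ else 0) =
      pairSum lam ⌊D₀⌋₊ fun d₁ d₂ => if (Nat.gcd d₁ d₂ : ℤ) ∣ k then Φ d₁ d₂ else 0 := by
  simp only [pairSum, ← tsum_ite_le_eq_sum_Icc_floor D₀]
  refine tsum_congr fun d₁ => ?_
  by_cases hd₁ : 1 ≤ d₁ ∧ (d₁ : ℝ) ≤ D₀
  · simp only [hd₁, and_self, true_and, if_true, ite_and, mul_ite, mul_zero]
  · rw [if_neg hd₁]
    exact (tsum_congr fun d₂ => if_neg fun h => hd₁ ⟨h.1, h.2.2.1⟩).trans tsum_zero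

lemma pairSum_ite_dilatedCorrelation_sub (lam : ℕ → ℝ) (D : ℕ) (G : ℕ → ℝ) (Y : ℝ) (k : ℤ) :
    (pairSum lam D fun d₁ d₂ => if (Nat.gcd d₁ d₂ : ℤ) ∣ k then
      dilatedCorrelation G d₁ d₂ k - Y / (Nat.lcm d₁ d₂ : ℝ) else 0) =
    (pairSum lam D fun d₁ d₂ => dilatedCorrelation G d₁ d₂ k) - Y * correlationMean lam D k := by
  rw [correlationMean, ← pairSum_const_mul, ← pairSum_sub]
  refine pairSum_congr fun d₁ _ d₂ _ => ?_
  split_ifs with hk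
  · ring
  · rw [dilatedCorrelation_eq_zero G hk]
    ring

lemma offDiagonalTerm_eq_sum {g : ℝ → ℝ} {X H D₀ : ℝ} {M : ℕ} (hH : 0 ≤ H)
    (hsupp : ∀ d, ⌊D₀⌋₊ < d → lam d = 0) (hg : ∀ y, M - H < y → g (y / X) = 0) :
    offDiagonalTerm g lam X H D₀ =
      ∑ n₁ ∈ Icc 1 M, ∑ n₂ ∈ Icc 1 M, divisorSum lam n₁ * divisorSum lam n₂ *
        (max (H - |(n₁ : ℝ) - n₂|) 0 * g (n₁ / X)) -
      H * ∑ n ∈ Icc 1 M, g (n / X) * divisorSum lam n ^ 2 -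
      (∫ t, g t) * X * (H ^ 2 * (∑ d ∈ Icc 1 ⌊D₀⌋₊, lam d / d) ^ 2 +
        2 * ∑ d ∈ Icc 1 ⌊D₀⌋₊, gammaCoeff H d *
          (∑ m ∈ Icc 1 ⌊D₀⌋₊, if d ∣ m then lam m / m else 0) ^ 2 -
        H * correlationMean lam ⌊D₀⌋₊ 0) := by
  set S : ℤ → ℝ := fun k => ∑ n₁ ∈ Icc 1 M, ∑ n₂ ∈ Icc 1 M,
    (if (n₁ : ℤ) = n₂ + k then g (n₁ / X) else 0) * (divisorSum lam n₁ * divisorSum lam n₂) with hS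
  have hpair : ∀ k ∈ Icc (-(⌊H⌋₊ : ℤ)) ⌊H⌋₊,
      pairSum lam ⌊D₀⌋₊ (fun d₁ d₂ => dilatedCorrelation (fun n => g (n / X)) d₁ d₂ k) = S k := by
    intro k hk
    refine pairSum_dilatedCorrelation hsupp fun n hn => hg n ?_
    have hkH : (k.natAbs : ℝ) ≤ H := by
      rw [Nat.cast_natAbs, Int.cast_abs]
      exact (mem_Icc_neg_floor_iff hH k).1 hk
    have hn' : (M : ℝ) < n + k.natAbs := by exact_mod_cast hn
    linarith
  have hzero : S 0 = ∑ n ∈ Icc 1 M, g (n / X) * divisorSum lam n ^ 2 := by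
    refine sum_congr rfl fun n hn => ?_
    simp only [add_zero, Nat.cast_inj, ite_mul, zero_mul, sum_ite_eq, hn, if_true, sq]
  have hfejer : ∑ n₁ ∈ Icc 1 M, ∑ n₂ ∈ Icc 1 M, divisorSum lam n₁ * divisorSum lam n₂ *
      (max (H - |(n₁ : ℝ) - n₂|) 0 * g (n₁ / X)) =
        ∑ k ∈ Icc (-(⌊H⌋₊ : ℤ)) ⌊H⌋₊, (H - |(k : ℝ)|) * S k := by
    simp only [max_sub_abs_eq_sum hH, hS, mul_sum, sum_mul]
    rw [sum_comm (s := Icc (-(⌊H⌋₊ : ℤ)) _)]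
    refine sum_congr rfl fun n₁ _ => ?_
    rw [sum_comm (s := Icc (-(⌊H⌋₊ : ℤ)) _)]
    refine sum_congr rfl fun n₂ _ => sum_congr rfl fun k _ => ?_
    split_ifs <;> ring
  rw [offDiagonalTerm]
  simp only [tsum_tsum_ite_gcd_dvd_eq_pairSum, pairSum_ite_dilatedCorrelation_sub]
  rw [tsum_ite_abs_le_eq_sum_sub hH, hfejer, ← sum_fejer_mul_correlationMean hH, ← hzero,
    sum_congr rfl fun k hk => by rw [hpair k hk],
    hpair 0 ((mem_Icc_neg_floor_iff hH 0).2 (by simpa))]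
  simp only [mul_sub, sum_sub_distrib, mul_left_comm _ ((∫ t, g t) * X), ← mul_sum, Int.cast_zero,
    abs_zero, sub_zero]
  ring

lemma secondMomentTerm_eq_sum {g : ℝ → ℝ} {X : ℝ} {M : ℕ} (hg : ∀ n : ℕ, M < n → g (n / X) = 0)
    (lam : ℕ → ℝ) (H : ℝ) :
    secondMomentTerm g lam X H = H * ∑ n ∈ Icc 1 M, g (n / X) * divisorSum lam n ^ 2 -
      (∫ t, g t) * H * X / X ^ 10 * ∑ n ∈ Icc 1 ⌊X ^ 10⌋₊, divisorSum lam n ^ 2 := by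
  rw [secondMomentTerm, tsum_ite_one_le_eq_sum_Icc fun n hn => ?_]
  rw [hg n hn, zero_mul]

lemma integral_typeISum_sub_sq {g : ℝ → ℝ} (hgi : Integrable g) {X H : ℝ} (hX : 0 < X) {M : ℕ}
    (hsupp : ∀ d, D < d → lam d = 0) (hg : ∀ y : ℝ, M < y → g (y / X) = 0) (E : ℝ) :
    ∫ y, g (y / X) * (typeISum lam H y - E) ^ 2 =
      ∑ n₁ ∈ Icc 1 M, ∑ n₂ ∈ Icc 1 M, divisorSum lam n₁ * divisorSum lam n₂ *
        (∫ y in Set.Ico (n₁ : ℝ) (n₁ + H) ∩ Set.Ico (n₂ : ℝ) (n₂ + H), g (y / X)) -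
      2 * E * ∑ n ∈ Icc 1 M, divisorSum lam n * (∫ y in Set.Ico (n : ℝ) (n + H), g (y / X)) +
      E ^ 2 * (X * ∫ t, g t) := by
  have hcongr (y : ℝ) : g (y / X) * (typeISum lam H y - E) ^ 2 = g (y / X) *
      (∑ n ∈ Icc 1 M, divisorSum lam n * (Set.Ico (n : ℝ) (n + H)).indicator 1 y - E) ^ 2 := by
    rcases le_or_gt y M with hy | hy
    · rw [typeISum_eq_sum_indicator hsupp hy]
    · rw [hg y hy, zero_mul, zero_mul]
  have hscale : ∫ y, g (y / X) = X * ∫ t, g t := by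
    rw [Measure.integral_comp_div, abs_of_pos hX, smul_eq_mul]
  rw [integral_congr_ae (.of_forall hcongr), integral_mul_sum_indicator_sub_sq
    (hgi.comp_div hX.ne') (fun n : ℕ => measurableSet_Ico), hscale]

lemma integral_typeISum_sub_sq_sub_terms {g : ℝ → ℝ} (hgi : Integrable g) {X H D₀ : ℝ} (hX : 0 < X)
    (hH : 0 ≤ H) {M : ℕ} (hsupp : ∀ d, ⌊D₀⌋₊ < d → lam d = 0)
    (hg : ∀ y, M - H < y → g (y / X) = 0) :
    (∫ y, g (y / X) * (typeISum lam H y - H * ∑ d ∈ Icc 1 ⌊D₀⌋₊, lam d / d) ^ 2) -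
        (diagonalTerm g lam X H D₀ + offDiagonalTerm g lam X H D₀ + secondMomentTerm g lam X H) =
      ∑ n₁ ∈ Icc 1 M, ∑ n₂ ∈ Icc 1 M, divisorSum lam n₁ * divisorSum lam n₂ *
        ((∫ y in Set.Ico (n₁ : ℝ) (n₁ + H) ∩ Set.Ico (n₂ : ℝ) (n₂ + H), g (y / X)) -
          max (H - |(n₁ : ℝ) - n₂|) 0 * g (n₁ / X)) -
      2 * H * (∑ d ∈ Icc 1 ⌊D₀⌋₊, lam d / d) *
        (∑ n ∈ Icc 1 M, divisorSum lam n * (∫ y in Set.Ico (n : ℝ) (n + H), g (y / X)) -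
          H * (X * ∫ t, g t) * ∑ d ∈ Icc 1 ⌊D₀⌋₊, lam d / d) +
      (∫ t, g t) * H * X / X ^ 10 *
        (∑ n ∈ Icc 1 ⌊X ^ 10⌋₊, divisorSum lam n ^ 2 -
          X ^ 10 * correlationMean lam ⌊D₀⌋₊ 0) := by
  have hg' (y : ℝ) (hy : M < y) : g (y / X) = 0 := hg y (by linarith)
  rw [integral_typeISum_sub_sq hgi hX hsupp hg', diagonalTerm_eq_sum,
    offDiagonalTerm_eq_sum hH hsupp hg,
    secondMomentTerm_eq_sum fun n hn => hg' n (by exact_mod_cast hn)]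
  simp only [mul_sub (divisorSum lam _ * _), sum_sub_distrib]
  field_simp
  ring

lemma abs_sum_mul_setIntegral_inter_sub_le {f : ℝ → ℝ} (hf : Integrable f) {H ε : ℝ} (hH : 1 ≤ H)
    (hε : ∀ u, ∀ y ∈ Set.Ico u (u + H), |f y - f u| ≤ ε) (c : ℕ → ℝ) (s : Finset ℕ) :
    |∑ n₁ ∈ s, ∑ n₂ ∈ s, c n₁ * c n₂ *
        ((∫ y in Set.Ico (n₁ : ℝ) (n₁ + H) ∩ Set.Ico (n₂ : ℝ) (n₂ + H), f y) -
          max (H - |(n₁ : ℝ) - n₂|) 0 * f n₁)| ≤ 3 * H ^ 2 * ε * ∑ n ∈ s, c n ^ 2 := by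
  have hε₀ : 0 ≤ ε := (abs_nonneg _).trans (hε 0 0 ⟨le_rfl, by linarith⟩)
  refine abs_sum_mul_mul_le_of_row_sum_le
    (J := fun n₁ n₂ : ℕ => (∫ y in Set.Ico (n₁ : ℝ) (n₁ + H) ∩ Set.Ico (n₂ : ℝ) (n₂ + H), f y) -
      max (H - |(n₁ : ℝ) - n₂|) 0 * f n₁)
    (w := fun n₁ n₂ : ℕ => max (H - |(n₁ : ℝ) - n₂|) 0 * ε)
    (fun n₁ n₂ => abs_setIntegral_Ico_inter_Ico_sub_le hf (hε n₁) n₂)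
    (fun n₁ n₂ => by rw [abs_sub_comm]) (fun n => ?_) c
  rw [← sum_mul]
  exact mul_le_mul_of_nonneg_right (sum_max_sub_abs_le hH n s) hε₀

lemma abs_sum_mul_setIntegral_Ico_sub_le {g : ℝ → ℝ} {a b B X H : ℝ} {M : ℕ} {C : ℕ → ℝ}
    (hg : Continuous g) (ha : 0 < a) (hsupp : ∀ t, g t ≠ 0 → t ∈ Set.Icc a b)
    (hB : ∀ t, |g t| ≤ B)
    (hC : ∀ d ∈ Icc 1 D, ∀ s, |∑' m : ℤ, g (s + d / X * m) - 1 / (d / X) * ∫ t, g t| ≤ C d)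
    (hX : 0 < X) (hH : 0 ≤ H) (hM : b * X ≤ M) (hlam : ∀ d, |lam d| ≤ 1)
    (hlam₀ : ∀ d, D < d → lam d = 0) :
    |∑ n ∈ Icc 1 M, divisorSum lam n * (∫ y in Set.Ico (n : ℝ) (n + H), g (y / X)) -
        H * (X * ∫ t, g t) * ∑ d ∈ Icc 1 D, lam d / d| ≤
      ∑ d ∈ Icc 1 D, H * (C d + B * ((H / d + 1) * (H / (a * X)))) := by
  have hinterval (n : ℕ) :
      ∫ y in Set.Ico (n : ℝ) (n + H), g (y / X) = ∫ y in (n : ℝ)..(n + H), g (y / X) := by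
    rw [intervalIntegral.integral_of_le (by linarith), integral_Ico_eq_integral_Ioc]
  have hswap : ∑ n ∈ Icc 1 M, divisorSum lam n * (∫ y in Set.Ico (n : ℝ) (n + H), g (y / X)) =
      ∑ d ∈ Icc 1 D, lam d * ∑ n ∈ Icc 1 M,
        if d ∣ n then ∫ y in (n : ℝ)..(n + H), g (y / X) else 0 := by
    simp only [mul_sum, hinterval]
    rw [sum_comm]
    refine sum_congr rfl fun n hn => ?_
    rw [divisorSum_eq_sum_Icc hlam₀ (Nat.one_le_iff_ne_zero.1 (mem_Icc.1 hn).1), sum_mul]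
    exact sum_congr rfl fun d _ => by split_ifs <;> ring
  rw [hswap, mul_sum, ← sum_sub_distrib]
  refine (abs_sum_le_sum_abs _ _).trans (sum_le_sum fun d hd => ?_)
  rw [mul_div_left_comm, ← mul_sub, abs_mul]
  exact (mul_le_of_le_one_left (abs_nonneg _) (hlam d)).trans
    (abs_sum_dvd_integral_sub_le hg ha hsupp hB (hC d hd) hX hH (mem_Icc.1 hd).1 hM)

lemma sum_pow_add_mul_le {C B a X H : ℝ} {K : ℕ} (hC : 0 ≤ C) (hB : 0 ≤ B) (ha : 0 < a)
    (hX : 0 < X) (hH : 0 ≤ H) (hHX : H ≤ X) (hDX : D ≤ X) (hDK : X * (D / X) ^ (K + 2) ≤ 1) :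
    ∑ d ∈ Icc 1 D, (C * (d / X) ^ (K + 1) + B * ((H / d + 1) * (H / (a * X)))) ≤
      C + B * (H / a * (harmonic D + 1)) := by
  have hpow : ∑ d ∈ Icc 1 D, ((d : ℝ) / X) ^ (K + 1) ≤ 1 := by
    calc ∑ d ∈ Icc 1 D, ((d : ℝ) / X) ^ (K + 1) ≤ ∑ _d ∈ Icc 1 D, ((D : ℝ) / X) ^ (K + 1) := by
          gcongr with d hd
          exact (mem_Icc.1 hd).2
      _ = X * (D / X) ^ (K + 2) := by
          rw [sum_const, Nat.card_Icc, nsmul_eq_mul, Nat.add_sub_cancel, pow_succ _ (K + 1)]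
          field_simp
      _ ≤ 1 := hDK
  have hharm : ∑ d ∈ Icc 1 D, (H / (d : ℝ) + 1) ≤ X * (harmonic D + 1) := by
    have := cast_harmonic_nonneg D
    rw [sum_add_distrib, sum_const, Nat.card_Icc, nsmul_eq_mul, Nat.add_sub_cancel, mul_one,
      mul_add, mul_one, cast_harmonic_eq_sum_Icc]
    simp only [div_eq_mul_inv, ← mul_sum]
    gcongr
  calc ∑ d ∈ Icc 1 D, (C * ((d : ℝ) / X) ^ (K + 1) + B * ((H / d + 1) * (H / (a * X)))) =
        C * ∑ d ∈ Icc 1 D, ((d : ℝ) / X) ^ (K + 1) +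
          B * ((∑ d ∈ Icc 1 D, (H / (d : ℝ) + 1)) * (H / (a * X))) := by
        rw [sum_add_distrib, mul_sum, sum_mul, mul_sum]
    _ ≤ C * 1 + B * (X * (harmonic D + 1) * (H / (a * X))) := by gcongr
    _ = C + B * (H / a * (harmonic D + 1)) := by field_simp

/-! ### The error terms -/

lemma half_le_log {X : ℝ} (hX : 2 ≤ X) : 1 / 2 ≤ log X := by
  have hlog : log 2 ≤ log X := log_le_log (by norm_num) hX
  linarith [log_two_gt_d9]

lemma harmonic_le_three_mul_log {X : ℝ} (hX : 2 ≤ X) (hDX : D ≤ X) :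
    (harmonic D : ℝ) ≤ 3 * log X := by
  rcases D.eq_zero_or_pos with rfl | hD
  · simpa using (log_nonneg (by linarith))
  · have hlog : log D ≤ log X := log_le_log (by exact_mod_cast hD) hDX
    linarith [harmonic_le_one_add_log D, half_le_log hX]

lemma mul_floor_div_pow_le_one {δ X D₀ : ℝ} (hδ : 0 < δ) (hX : 1 ≤ X) (hD : D₀ ≤ X ^ (1 - δ)) :
    X * ((⌊D₀⌋₊ : ℝ) / X) ^ (⌈1 / δ⌉₊ + 2) ≤ 1 := by
  have hX₀ : 0 < X := by linarith
  have hfloor : (⌊D₀⌋₊ : ℝ) / X ≤ X ^ (-δ) := by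
    rw [div_le_iff₀ hX₀, ← rpow_add_one hX₀.ne', neg_add_eq_sub]
    exact (Nat.floor_mono hD |> Nat.cast_le.2).trans (Nat.floor_le (by positivity))
  have hexp : -δ * (⌈1 / δ⌉₊ + 2 : ℕ) ≤ -1 := by
    have hceil := (div_le_iff₀ hδ).1 (Nat.le_ceil (1 / δ))
    push_cast
    linarith
  calc X * ((⌊D₀⌋₊ : ℝ) / X) ^ (⌈1 / δ⌉₊ + 2) ≤ X * (X ^ (-δ)) ^ (⌈1 / δ⌉₊ + 2) := by gcongr
    _ = X * X ^ (-δ * (⌈1 / δ⌉₊ + 2 : ℕ)) := by rw [rpow_mul hX₀.le, rpow_natCast]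
    _ ≤ X * X ^ (-1 : ℝ) := by gcongr
    _ = 1 := by rw [rpow_neg_one, mul_inv_cancel₀ hX₀.ne']

lemma exists_abs_overlap_error_le {g : ℝ → ℝ} (hg : ContDiff ℝ (⊤ : ℕ∞) g)
    (hgc : HasCompactSupport g) {b : ℝ} (hb : 0 ≤ b) :
    ∃ C, 0 ≤ C ∧ ∀ X H : ℝ, ∀ D M : ℕ, 1 ≤ H → 2 ≤ X → D ≤ X → M ≤ b * X →
      ∀ lam : ℕ → ℝ, (∀ d, |lam d| ≤ 1) → (∀ d, D < d → lam d = 0) →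
      |∑ n₁ ∈ Icc 1 M, ∑ n₂ ∈ Icc 1 M, divisorSum lam n₁ * divisorSum lam n₂ *
        ((∫ y in Set.Ico (n₁ : ℝ) (n₁ + H) ∩ Set.Ico (n₂ : ℝ) (n₂ + H), g (y / X)) -
          max (H - |(n₁ : ℝ) - n₂|) 0 * g (n₁ / X))| ≤ C * (H ^ 3 * log X ^ 3) := by
  obtain ⟨L, hL⟩ := ContDiff.lipschitzWith_of_hasCompactSupport hgc hg (by simp)
  refine ⟨81 * L * b, by positivity, fun X H D M hH hX hDX hM lam hlam hlam₀ => ?_⟩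
  have hX₀ : 0 < X := by linarith
  have hgX : Integrable fun y => g (y / X) :=
    (hg.continuous.integrable_of_hasCompactSupport hgc).comp_div hX₀.ne'
  have hosc (u y : ℝ) (hy : y ∈ Set.Ico u (u + H)) : |g (y / X) - g (u / X)| ≤ L * (H / X) := by
    refine (hL.dist_le_mul (y / X) (u / X)).trans ?_
    rw [Real.dist_eq, ← sub_div, abs_div, abs_of_pos hX₀, abs_of_nonneg (by linarith [hy.1])]
    gcongr
    linarith [hy.2]
  calc _ ≤ 3 * H ^ 2 * (L * (H / X)) * ∑ n ∈ Icc 1 M, divisorSum lam n ^ 2 :=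
        abs_sum_mul_setIntegral_inter_sub_le hgX hH hosc _ _
    _ ≤ 3 * H ^ 2 * (L * (H / X)) * (b * X * (3 * log X) ^ 3) := by
        have := cast_harmonic_nonneg D
        have hDlog := harmonic_le_three_mul_log hX hDX
        grw [sum_divisorSum_sq_le hlam hlam₀ M, hM, hDlog]
    _ = 81 * L * b * (H ^ 3 * log X ^ 3) := by field_simp; ring

lemma abs_sum_div_le_harmonic (hlam : ∀ d, |lam d| ≤ 1) (D : ℕ) :
    |∑ d ∈ Icc 1 D, lam d / d| ≤ harmonic D := by
  rw [cast_harmonic_eq_sum_Icc]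
  refine (abs_sum_le_sum_abs _ _).trans (sum_le_sum fun d _ => ?_)
  rw [abs_div, Nat.abs_cast, div_eq_mul_inv]
  exact mul_le_of_le_one_left (by positivity) (hlam d)

lemma exists_abs_cross_error_le {g : ℝ → ℝ} (hg : ContDiff ℝ (⊤ : ℕ∞) g)
    (hgc : HasCompactSupport g) {a b : ℝ} (ha : 0 < a)
    (hsupp : ∀ t, g t ≠ 0 → t ∈ Set.Icc a b) (K : ℕ) :
    ∃ C, 0 ≤ C ∧ ∀ X H : ℝ, ∀ D M : ℕ, 1 ≤ H → H ≤ X → 2 ≤ X → D ≤ X →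
      X * (D / X) ^ (K + 2) ≤ 1 → b * X ≤ M →
      ∀ lam : ℕ → ℝ, (∀ d, |lam d| ≤ 1) → (∀ d, D < d → lam d = 0) →
      |2 * H * (∑ d ∈ Icc 1 D, lam d / d) *
        (∑ n ∈ Icc 1 M, divisorSum lam n * (∫ y in Set.Ico (n : ℝ) (n + H), g (y / X)) -
          H * (X * ∫ t, g t) * ∑ d ∈ Icc 1 D, lam d / d)| ≤ C * (H ^ 3 * log X ^ 3) := by
  obtain ⟨B, hB⟩ := hgc.exists_bound_of_continuous hg.continuous
  obtain ⟨C, hC₀, hC⟩ := exists_abs_tsum_sub_integral_le hg hgc K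
  have hB₀ : 0 ≤ B := (norm_nonneg _).trans (hB 0)
  refine ⟨24 * C + 60 * (B / a), by positivity,
    fun X H D M hH hHX hX hDX hDK hM lam hlam hlam₀ => ?_⟩
  have hX₀ : 0 < X := by linarith
  have hlog := half_le_log hX
  have hDlog := harmonic_le_three_mul_log hX hDX
  have hD₀ := cast_harmonic_nonneg D
  have hcross := abs_sum_mul_setIntegral_Ico_sub_le (C := fun d => C * (d / X) ^ (K + 1))
    hg.continuous ha hsupp hB
    (fun d hd => hC (d / X) (div_pos (Nat.cast_pos.2 (mem_Icc.1 hd).1) hX₀)) hX₀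
    (by linarith : 0 ≤ H) hM hlam hlam₀
  rw [← mul_sum] at hcross
  grw [sum_pow_add_mul_le hC₀ hB₀ ha hX₀ (by linarith) hHX hDX hDK] at hcross
  have hlog₁ : 1 ≤ 2 * log X := by linarith
  have hlog₂ : harmonic D + 1 ≤ 5 * log X := by linarith
  rw [abs_mul, abs_mul, abs_of_nonneg (show 0 ≤ 2 * H by linarith)]
  calc _ ≤ 2 * H * (3 * log X) * (H * (C + B * (H / a * (5 * log X)))) := by
        grw [hcross, abs_sum_div_le_harmonic hlam, hDlog, hlog₂]
    _ = 6 * C * (H ^ 2 * log X * 1) + 30 * (B / a) * (H ^ 3 * log X ^ 2 * 1) := by ring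
    _ ≤ 6 * C * (H ^ 2 * log X * (H * (2 * log X) ^ 2)) +
          30 * (B / a) * (H ^ 3 * log X ^ 2 * (2 * log X)) := by
        gcongr
        exact one_le_mul_of_one_le_of_one_le hH (one_le_pow₀ hlog₁)
    _ = (24 * C + 60 * (B / a)) * (H ^ 3 * log X ^ 3) := by ring

lemma abs_longMean_error_le {X H : ℝ} (hH : 1 ≤ H) (hX : 2 ≤ X) (hDX : D ≤ X)
    (hlam : ∀ d, |lam d| ≤ 1) (hlam₀ : ∀ d, D < d → lam d = 0) (I : ℝ) :
    |I * H * X / X ^ 10 * (∑ n ∈ Icc 1 ⌊X ^ 10⌋₊, divisorSum lam n ^ 2 -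
      X ^ 10 * correlationMean lam D 0)| ≤ 8 * |I| * (H ^ 3 * log X ^ 3) := by
  have : 0 < X := by linarith
  have hlog₃ : 1 ≤ (2 * log X) ^ 3 := one_le_pow₀ (by linarith [half_le_log hX])
  have hmean := abs_sum_divisorSum_sq_sub_le hlam hlam₀ (Y := X ^ 10) (by positivity)
  calc _ = |I| * H * (X / X ^ 10) * |∑ n ∈ Icc 1 ⌊X ^ 10⌋₊, divisorSum lam n ^ 2 -
          X ^ 10 * correlationMean lam D 0| := by
        rw [mul_div_assoc, abs_mul, abs_mul, abs_mul, abs_of_nonneg (by linarith : 0 ≤ H),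
          abs_of_pos (by positivity : 0 < X / X ^ 10)]
    _ ≤ |I| * H * (X / X ^ 10) * X ^ 2 := by grw [hmean, hDX]
    _ = |I| * (H * ((X ^ 7)⁻¹ * 1)) := by field_simp
    _ ≤ |I| * (H ^ 3 * (1 * (2 * log X) ^ 3)) := by
        gcongr
        · exact le_self_pow₀ hH (by norm_num)
        · exact inv_le_one_of_one_le₀ (one_le_pow₀ (by linarith))
    _ = 8 * |I| * (H ^ 3 * log X ^ 3) := by ring

lemma exists_support_subset_Icc_of_tsupport_subset_Ioi {g : ℝ → ℝ} (hgc : HasCompactSupport g)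
    (hg₀ : tsupport g ⊆ Set.Ioi 0) : ∃ a b, 0 < a ∧ 0 ≤ b ∧ ∀ t, g t ≠ 0 → t ∈ Set.Icc a b := by
  obtain ⟨a, ha, hga⟩ := hgc.isCompact.exists_forall_le' (f := id) continuousOn_id hg₀
  obtain ⟨b, hb⟩ := hgc.isCompact.bddAbove
  exact ⟨a, max b 0, ha, le_max_right _ _, fun t ht => ⟨hga t (subset_tsupport g ht),
    (hb (subset_tsupport g ht)).trans (le_max_left _ _)⟩⟩

theorem mean_square_type_I_expansion_general {δ : ℝ} (hδ : 0 < δ) {g : ℝ → ℝ}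
    (hg : ContDiff ℝ (⊤ : ℕ∞) g) (hgc : HasCompactSupport g) (hg₀ : tsupport g ⊆ Set.Ioi 0) :
    ∃ C, 0 < C ∧ ∀ X H D₀ : ℝ, 1 ≤ H → H ≤ X → 2 ≤ X → D₀ ≤ X ^ (1 - δ) →
      ∀ lam : ℕ → ℝ, (∀ d, |lam d| ≤ 1) → (∀ d : ℕ, D₀ < d → lam d = 0) →
      |(∫ y, g (y / X) * (typeISum lam H y -
          H * ∑' d : ℕ, if 1 ≤ d ∧ (d : ℝ) ≤ D₀ then lam d / d else 0) ^ 2) -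
        (diagonalTerm g lam X H D₀ + offDiagonalTerm g lam X H D₀ + secondMomentTerm g lam X H)| ≤
      C * H ^ 3 * log X ^ 3 := by
  obtain ⟨a, b, ha, hb, hsupp⟩ := exists_support_subset_Icc_of_tsupport_subset_Ioi hgc hg₀
  obtain ⟨C₁, hC₁, hoverlap⟩ := exists_abs_overlap_error_le hg hgc (add_nonneg hb zero_le_two)
  obtain ⟨C₂, hC₂, hcross⟩ := exists_abs_cross_error_le hg hgc ha hsupp ⌈1 / δ⌉₊
  refine ⟨C₁ + C₂ + 8 * |∫ t, g t| + 1, by positivity,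
    fun X H D₀ hH hHX hX hD lam hlam hlam₀ => ?_⟩
  have hX₀ : 0 < X := by linarith
  have hM := Nat.floor_le (show 0 ≤ (b + 2) * X by positivity)
  have hbM : (b + 1) * X ≤ ⌊(b + 2) * X⌋₊ := by linarith [Nat.lt_floor_add_one ((b + 2) * X)]
  have hvanish (y : ℝ) (hy : ⌊(b + 2) * X⌋₊ - H < y) : g (y / X) = 0 := by
    by_contra hne
    linarith [(div_le_iff₀ hX₀).1 (hsupp _ hne).2]
  have hlam₀' (d : ℕ) (hd : ⌊D₀⌋₊ < d) : lam d = 0 := hlam₀ d (Nat.lt_of_floor_lt hd)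
  have hDX : (⌊D₀⌋₊ : ℝ) ≤ X := by
    have hpow : X ^ (1 - δ) ≤ X := rpow_le_self_of_one_le (by linarith) (by linarith)
    exact (Nat.cast_le.2 (Nat.floor_mono (hD.trans hpow))).trans (Nat.floor_le hX₀.le)
  rw [tsum_ite_le_eq_sum_Icc_floor, integral_typeISum_sub_sq_sub_terms
    (hg.continuous.integrable_of_hasCompactSupport hgc) hX₀ (by linarith) hlam₀' hvanish]
  have h₁ := hoverlap X H _ _ hH hX hDX hM lam hlam hlam₀'
  have h₂ := hcross X H _ ⌊(b + 2) * X⌋₊ hH hHX hX hDX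
    (mul_floor_div_pow_le_one hδ (by linarith) hD) (by linarith) lam hlam hlam₀'
  have h₃ := abs_longMean_error_le hH hX hDX hlam hlam₀' (∫ t, g t)
  have hpos : 0 ≤ H ^ 3 * log X ^ 3 := by have := half_le_log hX; positivity
  refine (abs_add_le _ _).trans ?_
  grw [abs_sub, h₁, h₂, h₃]
  linarith

end Expansion

/-- Proposition 3.1 (mean square expansion for type I sums in short intervals).
For `2 ≤ H ≤ X`, `2 ≤ D₀ ≤ X^{1−δ}`, bounded `λ_d` supported on `d ≤ D₀`, and `g` smooth
compactly supported in `[1/4, 2]`,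
`∫ g(y/X)·(Σ_{y−H<dm≤y} λ_d − H Σ_{d≤D₀} λ_d/d)² dy = S₁ + S₂ + S₃ + O(H³ (log X)³)`,
the implied constant depending only on `g` and `δ`. -/
theorem mean_square_type_I_expansion
    (δ : ℝ) (hδ : 0 < δ) (g : ℝ → ℝ) (hg : ContDiff ℝ (⊤ : ℕ∞) g)
    (hgsupp : Function.support g ⊆ Set.Icc (1 / 4 : ℝ) 2) :
    ∃ C : ℝ, 0 < C ∧
      ∀ X H D₀ : ℝ, 2 ≤ H → H ≤ X → 2 ≤ D₀ → D₀ ≤ X ^ (1 - δ) →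
      ∀ lam : ℕ → ℝ, (∀ d, |lam d| ≤ 1) → (∀ d : ℕ, D₀ < (d : ℝ) → lam d = 0) →
      |(∫ y : ℝ, g (y / X) *
          ((∑' d : ℕ, ∑' m : ℕ, if 1 ≤ d ∧ 1 ≤ m ∧
                y - H < (d * m : ℕ) ∧ ((d * m : ℕ) : ℝ) ≤ y then lam d else 0)
            - H * ∑' d : ℕ, (if 1 ≤ d ∧ (d : ℝ) ≤ D₀ then lam d / d else 0)) ^ 2)
        - ((2 * (∫ t : ℝ, g t) * X *
              ∑' d : ℕ, (if 1 ≤ d ∧ (d : ℝ) ≤ D₀ then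
                (∑' m : ℕ, if 1 ≤ m ∧ Nat.gcd m d = 1 then
                    ((d : ℝ) / (π * m) * sin (π * m * H / d)) ^ 2 else 0) *
                (∑' m : ℕ, if 1 ≤ m ∧ (m : ℝ) ≤ D₀ ∧ d ∣ m then lam m / m else 0) ^ 2
              else 0))
          + (∑' k : ℤ, if k ≠ 0 ∧ |(k : ℝ)| ≤ H then
              (H - |(k : ℝ)|) *
                ∑' d₁ : ℕ, ∑' d₂ : ℕ,
                  (if 1 ≤ d₁ ∧ 1 ≤ d₂ ∧ (d₁ : ℝ) ≤ D₀ ∧ (d₂ : ℝ) ≤ D₀ ∧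
                      ((Nat.gcd d₁ d₂ : ℤ) ∣ k) then
                    lam d₁ * lam d₂ *
                      ((∑' m₁ : ℕ, ∑' m₂ : ℕ,
                          if 1 ≤ m₁ ∧ 1 ≤ m₂ ∧
                              ((d₁ * m₁ : ℕ) : ℤ) = (d₂ * m₂ : ℕ) + k then
                            g (((d₁ * m₁ : ℕ) : ℝ) / X) else 0)
                        - (∫ t : ℝ, g t) * X / (Nat.lcm d₁ d₂ : ℝ))
                  else 0)
            else 0)
          + (H * (∑' n : ℕ, if 1 ≤ n then
                g ((n : ℝ) / X) * (∑ d ∈ n.divisors, lam d) ^ 2 else 0)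
              - (∫ t : ℝ, g t) * H * X / X ^ (10 : ℕ) *
                ∑ n ∈ Finset.Icc 1 ⌊X ^ (10 : ℕ)⌋₊, (∑ d ∈ n.divisors, lam d) ^ 2))|
        ≤ C * H ^ 3 * Real.log X ^ 3 := by
  have hgc : HasCompactSupport g :=
    HasCompactSupport.of_support_subset_isCompact isCompact_Icc hgsupp
  have hg₀ : tsupport g ⊆ Set.Ioi 0 := (closure_minimal hgsupp isClosed_Icc).trans
    fun t ht => (by norm_num : (0 : ℝ) < 1 / 4).trans_le ht.1
  obtain ⟨C, hC₀, hC⟩ := mean_square_type_I_expansion_general hδ hg hgc hg₀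
  exact ⟨C, hC₀, fun X H D₀ hH hHX _ hD lam hlam hlam₀ =>
    hC X H D₀ (one_le_two.trans hH) hHX (hH.trans hHX) hD lam hlam hlam₀⟩
end

section
/- Fix δ ∈ (0, 1/30000]. There is a constant C(δ) such that for all sufficiently large X, setting w = X^δ and E = X^{1/1000}, for every real Y with X ≤ Y ≤ X^{10} one has Σ_{n ≤ Y} ( Σ_{e | gcd-part} ρ_e^± )² ≤ C(δ)·Y/log X for both choices of sign, where the inner sum runs over the squarefree divisors e of n all of whose prime factors are < w (i.e. over e | (n, P(w))). -/
open scoped Classical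

/-- Generic (β-)sieve weight: for squarefree `d = p₁⋯p_r` with primes
`lo ≤ p_r < ⋯ < p₁ < hi` satisfying `p₁⋯p_m·p_m^β < lvl` for all `m ≤ r` of the
prescribed parity (odd if `useOdd`, even otherwise), the weight is `μ(d)`;
otherwise it is `0` (and `1` gets weight `μ(1) = 1`). -/
noncomputable def sieveWeight (lo hi lvl : ℝ) (β : ℕ) (useOdd : Bool) (d : ℕ) : ℝ :=
  if Squarefree d ∧ (∀ p ∈ d.primeFactors, lo ≤ (p : ℝ) ∧ (p : ℝ) < hi) ∧
      (∀ m : ℕ, 1 ≤ m → m ≤ d.primeFactorsList.length →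
        (if useOdd then Odd m else Even m) →
        (((d.primeFactorsList.reverse.take m).prod : ℕ) : ℝ) *
          ((d.primeFactorsList.reverse.getD (m - 1) 1 : ℕ) : ℝ) ^ β < lvl)
  then (ArithmeticFunction.moebius d : ℝ) else 0

/-- `(k, P(lo,hi))`: the product of the distinct primes `p` of `k` with `lo ≤ p < hi`;
with `lo = 0` this is the largest squarefree divisor of `k` with all prime factors `< hi`. -/
noncomputable def gcdPart (lo hi : ℝ) (k : ℕ) : ℕ :=
  ∏ p ∈ k.primeFactors.filter (fun p : ℕ => lo ≤ (p : ℝ) ∧ (p : ℝ) < hi), p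

/-!
Let `g = (n, P(w))`, let `p` be its smallest prime factor and `v = log p / log w`. The divisors of
`g` come in pairs `e`, `p * e` with `p ∤ e`. As `p` is smaller than all primes of `e`, the weights
of such a pair cancel unless the level condition of `p * e` fails at `p` alone. Every admissible
pair of primes leaves at least the proportion `1 - 2 / 30 = 14 / 15` of the available room, so such
a failure forces `(14 / 15) ^ ⌊(ω(g) + 1) / 2⌋ ≤ v`, hence `1 ≤ 2 ^ (ω(g) + 1) * v ^ 20`. Together
with the trivial bound `4 ^ ω(g)` this gives `2 * v ^ 20 * 8 ^ ω(g)` as a bound for the square in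
all cases.

The sum of `8 ^ ω(g)` over the integers up to `Y / p` without prime factor below `p` is
`O(v⁻¹² * Y / (p * log X))`: compare `f * log` with the convolution `f * Λ`, use Chebyshev's bound
for `ψ`, and bound the logarithmic mean of `f` by its Euler product. The remaining sum of
`v ^ 8 / p` over the primes `p < w` is bounded by Mertens' first theorem.
-/

section Mertens

open Finset

lemma sum_Icc_mul_le_of_sum_Icc_le {a g : ℕ → ℝ} {K : ℝ} {M N : ℕ} (ha : ∀ n, 0 ≤ a n)
    (hsum : ∀ n, ∑ i ∈ Icc 0 n, a i ≤ K * n) (hanti : AntitoneOn g (Set.Ici M))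
    (hg : ∀ n, M ≤ n → 0 ≤ g n) (hMN : M ≤ N) :
    ∑ n ∈ Icc M N, a n * g n ≤ K * (M * g M + ∑ n ∈ Ioc M N, g n) := by
  -- Summation by parts: the boundary term has to be carried along for the induction to close.
  suffices h : ∑ n ∈ Icc M N, a n * g n + (K * N - ∑ i ∈ Icc 0 N, a i) * g N
      ≤ K * (M * g M + ∑ n ∈ Ioc M N, g n) from
    (le_add_of_nonneg_right (mul_nonneg (sub_nonneg.2 (hsum N)) (hg N hMN))).trans h
  induction N, hMN using Nat.le_induction with
  | base =>
    have hle : a M ≤ ∑ i ∈ Icc 0 M, a i :=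
      single_le_sum (fun i _ => ha i) (mem_Icc.2 ⟨M.zero_le, le_rfl⟩)
    have := mul_le_mul_of_nonneg_right hle (hg M le_rfl)
    simp only [Icc_self, sum_singleton, Ioc_self, sum_empty]
    linarith
  | succ N hMN ih =>
    rw [← insert_Icc_right_eq_Icc_add_one (by omega), sum_insert (by simp),
      ← insert_Icc_right_eq_Icc_add_one (by omega), sum_insert (by simp),
      ← insert_Ioc_right_eq_Ioc_add_one hMN, sum_insert (by simp)]
    have hstep : g (N + 1) ≤ g N := hanti hMN (hMN.trans N.le_succ) N.le_succ
    have := mul_le_mul_of_nonneg_left hstep (sub_nonneg.2 (hsum N))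
    push_cast
    linarith

lemma sum_prime_log_mul_le {g : ℕ → ℝ} {M N : ℕ} (hanti : AntitoneOn g (Set.Ici M))
    (hg : ∀ n, M ≤ n → 0 ≤ g n) (hMN : M ≤ N) :
    ∑ p ∈ Icc M N with p.Prime, Real.log p * g p
      ≤ Real.log 4 * (M * g M + ∑ n ∈ Ioc M N, g n) := by
  have h := sum_Icc_mul_le_of_sum_Icc_le (a := fun n => if n.Prime then Real.log n else 0)
    (fun n => by split_ifs <;> positivity)
    (fun n => by
      simpa [sum_filter, Chebyshev.theta_eq_sum_Icc]
        using Chebyshev.theta_le_log4_mul_x (x := n) n.cast_nonneg) hanti hg hMN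
  simpa only [sum_filter, ite_mul, zero_mul] using h

lemma log_four_le : Real.log 4 ≤ 3 / 2 := by
  linarith [Real.log_four_eq, Real.log_two_lt_d9]

lemma sum_prime_log_div_le {N : ℕ} (hN : 1 ≤ N) :
    ∑ p ∈ Icc 1 N with p.Prime, Real.log p / p ≤ Real.log 4 * (1 + Real.log N) := by
  have hanti : AntitoneOn (fun n : ℕ => (n : ℝ)⁻¹) (Set.Ici 1) := fun m hm n _ hmn =>
    inv_anti₀ (by exact_mod_cast hm) (by exact_mod_cast hmn)
  calc ∑ p ∈ Icc 1 N with p.Prime, Real.log p / p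
      ≤ Real.log 4 * ((1 : ℕ) * ((1 : ℕ) : ℝ)⁻¹ + ∑ n ∈ Ioc 1 N, (n : ℝ)⁻¹) :=
        sum_prime_log_mul_le hanti (fun n _ => by positivity) hN
    _ = Real.log 4 * (harmonic N : ℝ) := by
        rw [harmonic_eq_sum_Icc, ← add_sum_Ioc_eq_sum_Icc hN]
        push_cast
        ring
    _ ≤ Real.log 4 * (1 + Real.log N) :=
        mul_le_mul_of_nonneg_left (harmonic_le_one_add_log N) (by positivity)

lemma sub_div_mul_log_le_log_log_div {x y : ℝ} (hx : 1 < x) (hxy : x < y) :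
    (y - x) / (y * Real.log y) ≤ Real.log (Real.log y / Real.log x) := by
  have hlx := Real.log_pos hx
  have hly := Real.log_pos (hx.trans hxy)
  have hy : 0 < y := by linarith
  calc (y - x) / (y * Real.log y) = (1 - (y / x)⁻¹) / Real.log y := by
        field_simp
    _ ≤ Real.log (y / x) / Real.log y := by
        gcongr
        exact Real.one_sub_inv_le_log_of_pos (by positivity)
    _ = 1 - (Real.log y / Real.log x)⁻¹ := by
        rw [Real.log_div (by positivity) (by positivity)]
        field_simp
    _ ≤ Real.log (Real.log y / Real.log x) :=
        Real.one_sub_inv_le_log_of_pos (by positivity)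

lemma sum_one_div_pred_mul_log_le {M N : ℕ} (hM : 2 ≤ M) (hMN : M ≤ N) :
    ∑ n ∈ Ioc M N, 1 / (((n : ℝ) - 1) * Real.log n)
      ≤ Real.log (Real.log N / Real.log M) + (1 / (M : ℝ) - 1 / N) := by
  have hlog : ∀ n : ℕ, M ≤ n → 0 < Real.log n := fun n hn =>
    Real.log_pos (by exact_mod_cast hM.trans hn)
  induction N, hMN using Nat.le_induction with
  | base => simp [div_self (hlog M le_rfl).ne']
  | succ N hMN ih =>
    rw [← insert_Ioc_right_eq_Ioc_add_one hMN, sum_insert (by simp)]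
    have hN : (2 : ℝ) ≤ N := by exact_mod_cast hM.trans hMN
    have hN0 : (0 : ℝ) < N := by linarith
    have hlogM := hlog M le_rfl
    have hlogN := hlog N hMN
    have hlogN1 := hlog (N + 1) (by omega)
    have hdiff := sub_div_mul_log_le_log_log_div (x := N) (y := (N + 1 : ℕ)) (by linarith) (by simp)
    have hone : 1 ≤ Real.log (N + 1 : ℕ) := by
      rw [Real.le_log_iff_exp_le (by positivity)]
      push_cast
      linarith [Real.exp_one_lt_d9]
    have hsplit : 1 / (((N + 1 : ℕ) - 1 : ℝ) * Real.log (N + 1 : ℕ))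
        = ((N + 1 : ℕ) - N : ℝ) / ((N + 1 : ℕ) * Real.log (N + 1 : ℕ))
          + (1 / (N : ℝ) - 1 / (N + 1 : ℕ)) / Real.log (N + 1 : ℕ) := by
      push_cast at hlogN1 ⊢
      rw [add_sub_cancel_right, add_sub_cancel_left]
      field_simp
      ring
    have htail : (1 / (N : ℝ) - 1 / (N + 1 : ℕ)) / Real.log (N + 1 : ℕ)
        ≤ 1 / (N : ℝ) - 1 / (N + 1 : ℕ) := by
      refine div_le_self (sub_nonneg.2 (one_div_le_one_div_of_le (by linarith) ?_)) hone
      simp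
    rw [Real.log_div hlogN1.ne' hlogN.ne'] at hdiff
    rw [Real.log_div hlogN.ne' hlogM.ne'] at ih
    rw [Real.log_div hlogN1.ne' hlogM.ne']
    linarith

lemma sum_prime_Icc_one_div_pred_le {M N : ℕ} (hM : 2 ≤ M) (hMN : M ≤ N) :
    ∑ p ∈ Icc M N with p.Prime, 1 / ((p : ℝ) - 1)
      ≤ 3 / 2 * Real.log (Real.log N / Real.log M) + 5 := by
  have htwo : ∀ n : ℕ, M ≤ n → (2 : ℝ) ≤ n := fun n hn => by exact_mod_cast hM.trans hn
  have hlog : ∀ n : ℕ, M ≤ n → 0 < Real.log n := fun n hn => Real.log_pos (by linarith [htwo n hn])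
  have hpred : ∀ n : ℕ, M ≤ n → (0 : ℝ) < n - 1 := fun n hn => by linarith [htwo n hn]
  have hanti : AntitoneOn (fun n : ℕ => 1 / (((n : ℝ) - 1) * Real.log n)) (Set.Ici M) := by
    intro m hm n _ hmn
    have := hpred m hm
    have := hlog m hm
    have : (m : ℝ) ≤ n := by exact_mod_cast hmn
    dsimp only
    gcongr
    · linarith
    · linarith
  have hratio : 0 ≤ Real.log (Real.log N / Real.log M) := by
    refine Real.log_nonneg ((one_le_div (hlog M le_rfl)).2 (Real.log_le_log ?_ ?_))
    · linarith [htwo M le_rfl]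
    · exact_mod_cast hMN
  have hfirst : Real.log 4 * (M * (1 / (((M : ℝ) - 1) * Real.log M))) ≤ 4 := by
    have h2 : Real.log 2 ≤ Real.log M := Real.log_le_log (by norm_num) (htwo M le_rfl)
    have := hpred M le_rfl
    have := hlog M le_rfl
    rw [mul_one_div, mul_div_assoc', div_le_iff₀ (by positivity), Real.log_four_eq]
    nlinarith [htwo M le_rfl]
  have htail : 1 / (M : ℝ) - 1 / N ≤ 1 / 2 := by
    have : (0 : ℝ) ≤ 1 / N := by positivity
    linarith [one_div_le_one_div_of_le (by norm_num) (htwo M le_rfl)]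
  calc ∑ p ∈ Icc M N with p.Prime, 1 / ((p : ℝ) - 1)
      = ∑ p ∈ Icc M N with p.Prime, Real.log p * (1 / (((p : ℝ) - 1) * Real.log p)) := by
        refine sum_congr rfl fun p hp => ?_
        have := hlog p (mem_Icc.1 (mem_filter.1 hp).1).1
        field_simp
    _ ≤ Real.log 4 * (M * (1 / (((M : ℝ) - 1) * Real.log M))
          + ∑ n ∈ Ioc M N, 1 / (((n : ℝ) - 1) * Real.log n)) :=
        sum_prime_log_mul_le hanti
          (fun n hn => (one_div_pos.2 (mul_pos (hpred n hn) (hlog n hn))).le) hMN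
    _ ≤ 4 + Real.log 4 * (Real.log (Real.log N / Real.log M) + 1 / 2) := by
        rw [mul_add]
        gcongr
        linarith [sum_one_div_pred_mul_log_le hM hMN]
    _ ≤ 4 + 3 / 2 * (Real.log (Real.log N / Real.log M) + 1 / 2) := by
        gcongr
        exact log_four_le
    _ ≤ 3 / 2 * Real.log (Real.log N / Real.log M) + 5 := by linarith

lemma sum_prime_one_div_pred_le {z u : ℝ} {N : ℕ} (hz : 2 ≤ z) (hu : 1 ≤ u)
    (hN : Real.log N ≤ u * Real.log z) :
    ∑ p ∈ Icc ⌈z⌉₊ N with p.Prime, 1 / ((p : ℝ) - 1) ≤ 3 / 2 * Real.log u + 5 := by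
  rcases lt_or_ge N ⌈z⌉₊ with hNz | hzN
  · have := Real.log_nonneg hu
    rw [Icc_eq_empty (by omega), filter_empty, sum_empty]
    positivity
  have hM : (2 : ℝ) ≤ ⌈z⌉₊ := hz.trans (Nat.le_ceil z)
  have hlogM : 0 < Real.log ⌈z⌉₊ := Real.log_pos (by linarith)
  have hlogN : 0 < Real.log N :=
    hlogM.trans_le (Real.log_le_log (by linarith) (by exact_mod_cast hzN))
  refine (sum_prime_Icc_one_div_pred_le (by exact_mod_cast hM) hzN).trans ?_
  gcongr
  refine (div_le_iff₀ hlogM).2 (hN.trans ?_)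
  gcongr
  exact Nat.le_ceil z

end Mertens

section MultiplicativeMean

open ArithmeticFunction Finset

lemma mul_log_le_mul_vonMangoldt {f : ArithmeticFunction ℝ} {B : ℝ}
    (hB : ∀ d m, IsPrimePow d → f (d * m) ≤ B * f m) (n : ℕ) :
    f n * Real.log n ≤ B * (f * vonMangoldt) n := by
  rw [← vonMangoldt_sum, ← Nat.sum_divisorsAntidiagonal' fun _ d => vonMangoldt d, mul_apply,
    mul_sum, mul_sum]
  refine sum_le_sum fun x hx => ?_
  obtain ⟨hmul, -⟩ := Nat.mem_divisorsAntidiagonal.1 hx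
  by_cases hd : IsPrimePow x.2
  · rw [← mul_assoc, ← hmul, mul_comm x.1]
    exact mul_le_mul_of_nonneg_right (hB _ _ hd) vonMangoldt_nonneg
  · simp [vonMangoldt_eq_zero_iff.2 hd]

lemma sum_mul_log_le {f : ArithmeticFunction ℝ} {B : ℝ} (hf : ∀ n, 0 ≤ f n) (hB0 : 0 ≤ B)
    (hB : ∀ d m, IsPrimePow d → f (d * m) ≤ B * f m) (N : ℕ) :
    ∑ n ∈ Ioc 0 N, f n * Real.log n ≤ 6 * B * (N * ∑ n ∈ Ioc 0 N, f n / n) := by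
  have hpsi : ∀ n, ∑ m ∈ Ioc 0 (N / n), vonMangoldt m ≤ 6 * (N / n : ℝ) := fun n =>
    calc ∑ m ∈ Ioc 0 (N / n), vonMangoldt m = Chebyshev.psi (N / n : ℕ) := by
          rw [Chebyshev.psi, Nat.floor_natCast]
      _ ≤ (Real.log 4 + 4) * (N / n : ℕ) := Chebyshev.psi_le_const_mul_self (Nat.cast_nonneg _)
      _ ≤ 6 * (N / n : ℝ) := by
          gcongr
          · linarith [log_four_le]
          · exact Nat.cast_div_le
  calc ∑ n ∈ Ioc 0 N, f n * Real.log n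
      ≤ ∑ n ∈ Ioc 0 N, B * (f * vonMangoldt) n :=
        sum_le_sum fun n _ => mul_log_le_mul_vonMangoldt hB n
    _ = B * ∑ n ∈ Ioc 0 N, f n * ∑ m ∈ Ioc 0 (N / n), vonMangoldt m := by
        rw [← mul_sum, sum_Ioc_mul_eq_sum_sum]
    _ ≤ B * ∑ n ∈ Ioc 0 N, f n * (6 * (N / n : ℝ)) := by
        gcongr with n
        · exact hf n
        · exact hpsi n
    _ = 6 * B * (N * ∑ n ∈ Ioc 0 N, f n / n) := by
        simp only [mul_sum]
        exact sum_congr rfl fun n _ => by ring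

lemma log_mul_sum_le {f : ArithmeticFunction ℝ} {B : ℝ} (hf : ∀ n, 0 ≤ f n) (hB0 : 0 ≤ B)
    (hB : ∀ d m, IsPrimePow d → f (d * m) ≤ B * f m) (N : ℕ) :
    Real.log N * ∑ n ∈ Ioc 0 N, f n ≤ (6 * B + 1) * (N * ∑ n ∈ Ioc 0 N, f n / n) := by
  have hdiff : ∀ n ∈ Ioc 0 N, f n * (Real.log N - Real.log n) ≤ N * (f n / n) := by
    intro n hn
    have hn0 : (0 : ℝ) < n := by exact_mod_cast (mem_Ioc.1 hn).1
    have hN0 : (0 : ℝ) < N := hn0.trans_le (by exact_mod_cast (mem_Ioc.1 hn).2)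
    calc f n * (Real.log N - Real.log n) = f n * Real.log (N / n) := by
          rw [Real.log_div hN0.ne' hn0.ne']
      _ ≤ f n * (N / n) :=
          mul_le_mul_of_nonneg_left (Real.log_le_self (by positivity)) (hf n)
      _ = N * (f n / n) := by ring
  calc Real.log N * ∑ n ∈ Ioc 0 N, f n
      = ∑ n ∈ Ioc 0 N, f n * (Real.log N - Real.log n) + ∑ n ∈ Ioc 0 N, f n * Real.log n := by
        rw [mul_sum, ← sum_add_distrib]
        exact sum_congr rfl fun n _ => by ring
    _ ≤ N * ∑ n ∈ Ioc 0 N, f n / n + 6 * B * (N * ∑ n ∈ Ioc 0 N, f n / n) := by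
        refine add_le_add ?_ (sum_mul_log_le hf hB0 hB N)
        rw [mul_sum]
        exact sum_le_sum hdiff
    _ = (6 * B + 1) * (N * ∑ n ∈ Ioc 0 N, f n / n) := by ring

lemma sum_filter_dvd_le {f : ArithmeticFunction ℝ} {B : ℝ}
    (hB : ∀ d m, IsPrimePow d → f (d * m) ≤ B * f m) {d : ℕ} (hd : IsPrimePow d) (N : ℕ) :
    ∑ n ∈ Ioc 0 N with d ∣ n, f n ≤ B * ∑ m ∈ Ioc 0 (N / d), f m := by
  have himage : {n ∈ Ioc 0 N | d ∣ n} = (Ioc 0 (N / d)).image (d * ·) := by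
    ext n
    simp only [mem_filter, mem_Ioc, mem_image, Nat.le_div_iff_mul_le hd.pos]
    constructor
    · rintro ⟨⟨hpos, hle⟩, m, rfl⟩
      exact ⟨m, ⟨Nat.pos_of_mul_pos_left hpos, by rwa [mul_comm]⟩, rfl⟩
    · rintro ⟨m, ⟨hpos, hle⟩, rfl⟩
      exact ⟨⟨Nat.mul_pos hd.pos hpos, by rwa [mul_comm]⟩, dvd_mul_right d m⟩
  rw [himage, sum_image fun a _ b _ => Nat.eq_of_mul_eq_mul_left hd.pos, mul_sum]
  exact sum_le_sum fun m _ => hB d m hd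

lemma prodPrimeFactors_nonneg {h : ℕ → ℝ} (h0 : ∀ p, 0 ≤ h p) (n : ℕ) :
    0 ≤ prodPrimeFactors h n := by
  rcases eq_or_ne n 0 with rfl | hn
  · simp
  · rw [prodPrimeFactors_apply hn]
    exact prod_nonneg fun p _ => h0 p

lemma prodPrimeFactors_prime_pow (h : ℕ → ℝ) {p k : ℕ} (hp : p.Prime) (hk : k ≠ 0) :
    prodPrimeFactors h (p ^ k) = h p := by
  rw [prodPrimeFactors_apply (pow_ne_zero k hp.ne_zero), Nat.primeFactors_prime_pow hk hp,
    prod_singleton]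

lemma prodPrimeFactors_isPrimePow_mul_le {h : ℕ → ℝ} {B : ℝ} (h0 : ∀ p, 0 ≤ h p)
    (hB : ∀ p, h p ≤ B) (hB1 : 1 ≤ B) (d m : ℕ) (hd : IsPrimePow d) :
    prodPrimeFactors h (d * m) ≤ B * prodPrimeFactors h m := by
  obtain ⟨p, k, hp, hk, rfl⟩ := (isPrimePow_nat_iff d).1 hd
  have hm0 := prodPrimeFactors_nonneg h0 m
  rcases eq_or_ne m 0 with rfl | hm
  · simp
  by_cases hpm : p ∣ m
  · have hunchanged : prodPrimeFactors h (p ^ k * m) = prodPrimeFactors h m := by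
      rw [prodPrimeFactors_apply (mul_ne_zero hd.ne_zero hm), prodPrimeFactors_apply hm,
        Nat.primeFactors_mul hd.ne_zero hm, Nat.primeFactors_prime_pow hk.ne' hp,
        union_eq_right.2 (singleton_subset_iff.2 (hp.mem_primeFactors hpm hm))]
    rw [hunchanged]
    exact le_mul_of_one_le_left hm0 hB1
  · rw [(IsMultiplicative.prodPrimeFactors h).map_mul_of_coprime
      (((hp.coprime_iff_not_dvd).2 hpm).pow_left k), prodPrimeFactors_prime_pow h hp hk.ne']
    exact mul_le_mul_of_nonneg_right (hB p) hm0

lemma hasSum_prodPrimeFactors_prime_pow_div (h : ℕ → ℝ) {p : ℕ} (hp : p.Prime) :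
    HasSum (fun k => prodPrimeFactors h (p ^ k) / (p ^ k : ℕ)) (1 + h p / ((p : ℝ) - 1)) := by
  have hp1 : (1 : ℝ) < p := by exact_mod_cast hp.one_lt
  have hpred : (p : ℝ) - 1 ≠ 0 := by linarith
  have hgeom := (hasSum_geometric_of_lt_one (inv_nonneg.2 (by positivity))
    (inv_lt_one_of_one_lt₀ hp1)).mul_left (h p / p)
  have hlimit : h p / p * (1 - (p : ℝ)⁻¹)⁻¹ = h p / (p - 1) := by field_simp
  have hterm : ∀ k, prodPrimeFactors h (p ^ (k + 1)) / (p ^ (k + 1) : ℕ)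
      = h p / p * (p : ℝ)⁻¹ ^ k := fun k => by
    rw [prodPrimeFactors_prime_pow h hp k.succ_ne_zero]
    push_cast
    rw [inv_pow]
    field_simp
    ring
  simp only [hlimit, ← hterm] at hgeom
  simpa using hgeom.zero_add (f := fun k => prodPrimeFactors h (p ^ k) / (p ^ k : ℕ))

lemma sum_prodPrimeFactors_div_le_exp {h : ℕ → ℝ} (h0 : ∀ p, 0 ≤ h p) (N : ℕ) :
    ∑ n ∈ Ioc 0 N, prodPrimeFactors h n / n
      ≤ Real.exp (∑ p ∈ (N + 1).primesBelow, h p / ((p : ℝ) - 1)) := by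
  set f : ℕ → ℝ := fun n => prodPrimeFactors h n / n with hf
  have hf0 : ∀ n, 0 ≤ f n := fun n => div_nonneg (prodPrimeFactors_nonneg h0 n) n.cast_nonneg
  have hmul : ∀ {m n : ℕ}, m.Coprime n → f (m * n) = f m * f n := fun hmn => by
    simp only [hf, (IsMultiplicative.prodPrimeFactors h).map_mul_of_coprime hmn, Nat.cast_mul,
      mul_div_mul_comm]
  obtain ⟨-, hprod⟩ := EulerProduct.summable_and_hasSum_smoothNumbers_prod_primesBelow_tsum
    (f := f) (by simp [hf]) hmul
    (fun hp => (hasSum_prodPrimeFactors_prime_pow_div h hp).summable.norm) (N + 1)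
  have hsmooth : ∀ n ∈ Ioc 0 N, (Nat.smoothNumbers (N + 1)).indicator f n = f n := fun n hn =>
    Set.indicator_of_mem (Nat.mem_smoothNumbers_of_lt (mem_Ioc.1 hn).1
      (Nat.lt_succ_of_le (mem_Ioc.1 hn).2)) f
  calc ∑ n ∈ Ioc 0 N, f n
      = ∑ n ∈ Ioc 0 N, (Nat.smoothNumbers (N + 1)).indicator f n :=
        (sum_congr rfl hsmooth).symm
    _ ≤ ∏ p ∈ (N + 1).primesBelow, ∑' k, f (p ^ k) :=
        sum_le_hasSum _ (fun n _ => Set.indicator_nonneg (fun m _ => hf0 m) n)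
          (hasSum_subtype_iff_indicator.1 hprod)
    _ ≤ ∏ p ∈ (N + 1).primesBelow, Real.exp (h p / ((p : ℝ) - 1)) :=
        prod_le_prod (fun p _ => tsum_nonneg fun k => hf0 _) fun p hp => by
          rw [(hasSum_prodPrimeFactors_prime_pow_div h (Nat.prime_of_mem_primesBelow hp)).tsum_eq,
            add_comm]
          exact Real.add_one_le_exp _
    _ = Real.exp (∑ p ∈ (N + 1).primesBelow, h p / ((p : ℝ) - 1)) := (Real.exp_sum _ _).symm

/-- The prime weight `0` on `[0, z)`, `B` on `[z, w)` and `1` on `[w, ∞)`. The multiplicative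
function `prodPrimeFactors (localWeight B z w)` is then `B ^ ω` of the `w`-smooth part, restricted
to the integers without prime factor below `z`. -/
noncomputable def localWeight (B z w : ℝ) (p : ℕ) : ℝ :=
  if (p : ℝ) < z then 0 else if (p : ℝ) < w then B else 1

lemma localWeight_nonneg {B : ℝ} (hB : 0 ≤ B) (z w : ℝ) (p : ℕ) : 0 ≤ localWeight B z w p := by
  unfold localWeight
  split_ifs <;> positivity

lemma localWeight_le {B : ℝ} (hB : 1 ≤ B) (z w : ℝ) (p : ℕ) : localWeight B z w p ≤ B := by
  unfold localWeight
  split_ifs <;> linarith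

lemma sum_localWeight_div_pred_le {B : ℝ} (hB : 0 ≤ B) (z w : ℝ) (N : ℕ) :
    ∑ p ∈ (N + 1).primesBelow, localWeight B z w p / ((p : ℝ) - 1)
      ≤ B * ∑ p ∈ Icc ⌈z⌉₊ ⌊w⌋₊ with p.Prime, 1 / ((p : ℝ) - 1)
        + ∑ p ∈ Icc ⌈w⌉₊ N with p.Prime, 1 / ((p : ℝ) - 1) := by
  set t : ℕ → ℝ := fun p => 1 / ((p : ℝ) - 1)
  have ht : ∀ p : ℕ, p.Prime → 0 ≤ t p := fun p hp =>
    one_div_nonneg.2 (sub_nonneg.2 (by exact_mod_cast hp.one_le))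
  have hsum_ite_le : ∀ s : Finset ℕ,
      ∑ p ∈ (N + 1).primesBelow, (if p ∈ s then t p else 0) ≤ ∑ p ∈ s with p.Prime, t p := by
    intro s
    rw [← sum_filter]
    refine sum_le_sum_of_subset_of_nonneg (fun p hp => ?_)
      fun p hp _ => ht p (mem_filter.1 hp).2
    exact mem_filter.2 ⟨(mem_filter.1 hp).2, Nat.prime_of_mem_primesBelow (mem_filter.1 hp).1⟩
  have hsplit : ∀ p ∈ (N + 1).primesBelow, localWeight B z w p / ((p : ℝ) - 1)
      ≤ B * (if p ∈ Icc ⌈z⌉₊ ⌊w⌋₊ then t p else 0) + if p ∈ Icc ⌈w⌉₊ N then t p else 0 := by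
    intro p hp
    obtain ⟨hpN, hprime⟩ := Nat.mem_primesBelow.1 hp
    have htp := ht p hprime
    have hnonneg : ∀ s : Finset ℕ, 0 ≤ if p ∈ s then t p else 0 := fun s => by
      split_ifs <;> simp [htp]
    rw [div_eq_mul_one_div]
    rcases lt_or_ge (p : ℝ) z with hz | hz
    · rw [localWeight, if_pos hz, zero_mul]
      exact add_nonneg (mul_nonneg hB (hnonneg _)) (hnonneg _)
    rcases lt_or_ge (p : ℝ) w with hw | hw
    · rw [localWeight, if_neg hz.not_gt, if_pos hw,
        if_pos (mem_Icc.2 ⟨Nat.ceil_le.2 hz, Nat.le_floor hw.le⟩)]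
      exact le_add_of_nonneg_right (hnonneg _)
    · rw [localWeight, if_neg hz.not_gt, if_neg hw.not_gt, one_mul,
        if_pos (mem_Icc.2 ⟨Nat.ceil_le.2 hw, Nat.le_of_lt_succ hpN⟩)]
      exact le_add_of_nonneg_left (mul_nonneg hB (hnonneg _))
  refine (sum_le_sum hsplit).trans ?_
  rw [sum_add_distrib, ← mul_sum]
  exact add_le_add (mul_le_mul_of_nonneg_left (hsum_ite_le _) hB) (hsum_ite_le _)

lemma log_mul_sum_prodPrimeFactors_localWeight_le {B z w u R : ℝ} {N : ℕ} (hB : 1 ≤ B)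
    (hz : 2 ≤ z) (hzw : z ≤ w) (hu : 1 ≤ u) (hw : Real.log w ≤ u * Real.log z)
    (hR : 1 ≤ R) (hN : Real.log N ≤ R * Real.log w) :
    Real.log N * ∑ n ∈ Ioc 0 N, prodPrimeFactors (localWeight B z w) n
      ≤ (6 * B + 1) * (N * (u ^ (3 / 2 * B) * R ^ (3 / 2 : ℝ) * Real.exp (5 * (B + 1)))) := by
  have hB0 : 0 ≤ B := zero_le_one.trans hB
  have hw2 : 2 ≤ w := hz.trans hzw
  have hfloor : Real.log ⌊w⌋₊ ≤ u * Real.log z := by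
    refine (Real.log_le_log ?_ (Nat.floor_le (by linarith))).trans hw
    exact_mod_cast Nat.floor_pos.2 (by linarith)
  have hweight := localWeight_nonneg hB0 z w
  calc Real.log N * ∑ n ∈ Ioc 0 N, prodPrimeFactors (localWeight B z w) n
      ≤ (6 * B + 1) * (N * ∑ n ∈ Ioc 0 N, prodPrimeFactors (localWeight B z w) n / n) :=
        log_mul_sum_le (prodPrimeFactors_nonneg hweight) hB0
          (prodPrimeFactors_isPrimePow_mul_le hweight (localWeight_le hB z w) hB) N
    _ ≤ (6 * B + 1) * (N * Real.exp
          (B * (3 / 2 * Real.log u + 5) + (3 / 2 * Real.log R + 5))) := by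
        gcongr
        refine (sum_prodPrimeFactors_div_le_exp hweight N).trans (Real.exp_le_exp.2 ?_)
        refine (sum_localWeight_div_pred_le hB0 z w N).trans ?_
        gcongr
        · exact sum_prime_one_div_pred_le hz hu hfloor
        · exact sum_prime_one_div_pred_le hw2 hR hN
    _ = (6 * B + 1) * (N * (u ^ (3 / 2 * B) * R ^ (3 / 2 : ℝ) * Real.exp (5 * (B + 1)))) := by
        rw [Real.rpow_def_of_pos (by linarith), Real.rpow_def_of_pos (by linarith),
          ← Real.exp_add, ← Real.exp_add]
        ring_nf

end MultiplicativeMean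

section BetaSieve

open ArithmeticFunction Finset

lemma pow_mul_le_sub_sum_range {x : ℕ → ℝ} {β L : ℝ} {r : ℕ} (hx : Antitone x) (hβ : 2 ≤ β)
    (hL : 0 ≤ L) (h0 : β * x 0 ≤ L)
    (hlevel : ∀ m, m + 1 < r → (m + 1) % 2 = r % 2 →
      ∑ i ∈ range (m + 1), x i + β * x m ≤ L) {m : ℕ} (hm : m ≤ r) (hpar : m % 2 = r % 2) :
    (1 - 2 / β) ^ ((m + 1) / 2) * L ≤ L - ∑ i ∈ range m, x i := by
  have hβ0 : 0 < β := by linarith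
  have hcontract : 0 ≤ 1 - 2 / β := sub_nonneg.2 ((div_le_one hβ0).2 hβ)
  have htwo : ∀ {a b : ℝ}, β * a ≤ b → 2 * a ≤ 2 / β * b := fun hab => by
    rw [div_mul_eq_mul_div, le_div_iff₀ hβ0]
    linarith
  have hx0 := htwo h0
  induction m using Nat.twoStepInduction with
  | zero => simp
  | one =>
    have : 0 ≤ 2 / β * L := by positivity
    simp only [Nat.reduceAdd, Nat.reduceDiv, pow_one, range_one, sum_singleton]
    linarith
  | more m ih _ =>
    rw [sum_range_succ, sum_range_succ, show (m + 2 + 1) / 2 = (m + 1) / 2 + 1 by omega, pow_succ']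
    rcases m with _ | k
    · have := hx (Nat.zero_le 1)
      simp only [Nat.reduceAdd, Nat.reduceDiv, pow_zero, mul_one, range_zero, sum_empty]
      linarith
    · have hk := htwo (le_sub_iff_add_le'.2 (hlevel k (by omega) (by omega)))
      have := mul_le_mul_of_nonneg_left (ih (by omega) (by omega)) hcontract
      have := hx (show k ≤ k + 1 by omega)
      have := hx (show k ≤ k + 1 + 1 by omega)
      linarith

lemma getD_ne_zero {l : List ℕ} (h0 : 0 ∉ l) (i : ℕ) : l.getD i 1 ≠ 0 := by
  rcases lt_or_ge i l.length with hi | hi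
  · rw [List.getD_eq_getElem _ _ hi]
    exact fun h => h0 (h ▸ List.getElem_mem hi)
  · rw [List.getD_eq_default _ _ hi]
    exact one_ne_zero

lemma prod_take_ne_zero {l : List ℕ} (h0 : 0 ∉ l) (m : ℕ) : (l.take m).prod ≠ 0 :=
  List.prod_ne_zero fun h => h0 (List.mem_of_mem_take h)

lemma log_prod_take {l : List ℕ} (h0 : 0 ∉ l) (m : ℕ) :
    Real.log (l.take m).prod = ∑ i ∈ range m, Real.log (l.getD i 1 : ℕ) := by
  induction m with
  | zero => simp
  | succ m ih =>
    have hprod : (l.take (m + 1)).prod = (l.take m).prod * l.getD m 1 := by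
      rw [List.take_add_one, List.prod_append, List.getD_eq_getElem?_getD]
      cases l[m]? <;> simp
    rw [hprod, Nat.cast_mul, Real.log_mul (by exact_mod_cast prod_take_ne_zero h0 m)
      (by exact_mod_cast getD_ne_zero h0 m), ih, sum_range_succ]

lemma antitone_log_getD {l : List ℕ} (h0 : 0 ∉ l) (hl : l.SortedGE) :
    Antitone fun i => Real.log (l.getD i 1 : ℕ) := by
  refine antitone_nat_of_succ_le fun i => Real.log_le_log
    (by exact_mod_cast (getD_ne_zero h0 (i + 1)).bot_lt) (Nat.cast_le.2 ?_)
  rcases lt_or_ge (i + 1) l.length with hi | hi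
  · rw [List.getD_eq_getElem _ _ hi, List.getD_eq_getElem _ _ (by omega)]
    exact List.pairwise_iff_getElem.1 hl.pairwise i (i + 1) (by omega) hi i.lt_succ_self
  · rw [List.getD_eq_default _ _ hi]
    exact Nat.one_le_iff_ne_zero.2 (getD_ne_zero h0 i)

/-- The level condition of the β-sieve on a list `p₁, …, p_r`: the inequality
`p₁⋯p_m·p_m^β < E` holds for all `m ≤ r` of the parity prescribed by `useOdd`. -/
def BetaAdmissible (β : ℕ) (E : ℝ) (useOdd : Bool) (l : List ℕ) : Prop :=
  ∀ m : ℕ, 1 ≤ m → m ≤ l.length → (if useOdd then Odd m else Even m) →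
    (((l.take m).prod : ℕ) : ℝ) * ((l.getD (m - 1) 1 : ℕ) : ℝ) ^ β < E

lemma betaAdmissible_append_singleton {β : ℕ} {E : ℝ} {useOdd : Bool} {l : List ℕ} {p : ℕ} :
    BetaAdmissible β E useOdd (l ++ [p]) ↔ BetaAdmissible β E useOdd l ∧
      ((if useOdd then Odd (l.length + 1) else Even (l.length + 1)) →
        (((l ++ [p]).prod : ℕ) : ℝ) * (p : ℝ) ^ β < E) := by
  have hlast : (l ++ [p]).getD l.length 1 = p := by simp
  have hlength : (l ++ [p]).length = l.length + 1 := by simp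
  have hprefix : ∀ {m}, 1 ≤ m → m ≤ l.length →
      (l ++ [p]).take m = l.take m ∧ (l ++ [p]).getD (m - 1) 1 = l.getD (m - 1) 1 :=
    fun h1 hm => ⟨List.take_append_of_le_length hm, List.getD_append _ _ _ _ (by omega)⟩
  have hfull : (l ++ [p]).take (l.length + 1) = l ++ [p] := List.take_of_length_le hlength.le
  constructor
  · refine fun h => ⟨fun m h1 hm hpar => ?_, fun hpar => ?_⟩
    · rw [← (hprefix h1 hm).1, ← (hprefix h1 hm).2]
      exact h m h1 (by omega) hpar
    · simpa only [hfull, Nat.add_sub_cancel, hlast]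
        using h (l.length + 1) (by omega) hlength.ge hpar
  · rintro ⟨hl, hp⟩ m h1 hm hpar
    rcases (hlength ▸ hm).lt_or_eq with hm | rfl
    · rw [(hprefix h1 (by omega)).1, (hprefix h1 (by omega)).2]
      exact hl m h1 (by omega) hpar
    · rw [hfull, Nat.add_sub_cancel, hlast]
      exact hp hpar

lemma log_prod_take_mul_pow {l : List ℕ} (h0 : 0 ∉ l) (β m : ℕ) :
    Real.log ((l.take (m + 1)).prod * (l.getD m 1 : ℕ) ^ β)
      = ∑ i ∈ range (m + 1), Real.log (l.getD i 1 : ℕ) + β * Real.log (l.getD m 1 : ℕ) := by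
  rw [Real.log_mul (by exact_mod_cast prod_take_ne_zero h0 (m + 1))
    (pow_ne_zero β (by exact_mod_cast getD_ne_zero h0 m)), Real.log_pow, log_prod_take h0]

lemma BetaAdmissible.sum_log_add_mul_log_le {β : ℕ} {E : ℝ} {useOdd : Bool} {l l' : List ℕ}
    (hl : BetaAdmissible β E useOdd l) (h0 : 0 ∉ l ++ l') {m : ℕ} (hm : m < l.length)
    (hpar : if useOdd then Odd (m + 1) else Even (m + 1)) :
    ∑ i ∈ range (m + 1), Real.log ((l ++ l').getD i 1 : ℕ)
      + β * Real.log ((l ++ l').getD m 1 : ℕ) ≤ Real.log E := by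
  have hlt := hl (m + 1) m.succ_pos hm hpar
  rw [Nat.add_sub_cancel, ← List.take_append_of_le_length (l₂ := l') hm,
    ← List.getD_append _ l' _ _ hm] at hlt
  rw [← log_prod_take_mul_pow h0]
  refine Real.log_le_log (mul_pos ?_ (pow_pos ?_ β)) hlt.le
  · exact_mod_cast (prod_take_ne_zero h0 (m + 1)).bot_lt
  · exact_mod_cast (getD_ne_zero h0 m).bot_lt

-- The remaining logarithmic room `log E - log (p₁⋯p_m)` shrinks at most by the factor `1 - 2 / β`
-- each time an admissible pair of primes is removed, and failure at `p` means that `β log p`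
-- exceeds the room that is left.
lemma pow_mul_log_le_of_not_betaAdmissible {β : ℕ} {E w : ℝ} {useOdd : Bool} {l : List ℕ} {p : ℕ}
    (hβ : 2 ≤ β) (hw : 1 < w) (hE : w ^ β ≤ E) (hsorted : (l ++ [p]).SortedGE)
    (h0 : 0 ∉ l ++ [p]) (hlt : ∀ q ∈ l ++ [p], (q : ℝ) < w) (hl : BetaAdmissible β E useOdd l)
    (hfail : ¬ BetaAdmissible β E useOdd (l ++ [p])) :
    (1 - 2 / (β : ℝ)) ^ ((l.length + 2) / 2) * Real.log w ≤ Real.log p := by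
  set x : ℕ → ℝ := fun i => Real.log ((l ++ [p]).getD i 1 : ℕ)
  have hlast : (l ++ [p]).getD l.length 1 = p := by simp
  have hlength : (l ++ [p]).length = l.length + 1 := by simp
  have hβ' : (2 : ℝ) ≤ β := by exact_mod_cast hβ
  have hlogw := Real.log_pos hw
  have hE0 : 0 < E := (pow_pos (zero_lt_one.trans hw) β).trans_le hE
  have hlogE : β * Real.log w ≤ Real.log E := by
    rw [← Real.log_pow]
    exact Real.log_le_log (pow_pos (zero_lt_one.trans hw) β) hE
  have hx0 : x 0 ≤ Real.log w := by
    refine Real.log_le_log (by exact_mod_cast (getD_ne_zero h0 0).bot_lt) ?_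
    rw [List.getD_eq_getElem _ _ (by omega)]
    exact (hlt _ (List.getElem_mem _)).le
  simp only [betaAdmissible_append_singleton, hl, true_and, Classical.not_imp, not_lt] at hfail
  obtain ⟨hpar, hfail⟩ := hfail
  have hlevel : ∀ m, m + 1 < l.length + 1 → (m + 1) % 2 = (l.length + 1) % 2 →
      ∑ i ∈ range (m + 1), x i + β * x m ≤ Real.log E := by
    intro m hm hmod
    refine hl.sum_log_add_mul_log_le h0 (by omega) ?_
    simpa only [Nat.odd_iff, Nat.even_iff, hmod] using hpar
  have hroom := pow_mul_le_sub_sum_range (antitone_log_getD h0 hsorted) hβ'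
    ((by positivity : 0 ≤ β * Real.log w).trans hlogE)
    ((mul_le_mul_of_nonneg_left hx0 (by positivity)).trans hlogE) hlevel le_rfl rfl
  have hlogfail : Real.log E ≤ ∑ i ∈ range (l.length + 1), x i + β * Real.log p := by
    have := log_prod_take_mul_pow h0 β l.length
    rw [hlast, List.take_of_length_le hlength.le] at this
    exact this ▸ Real.log_le_log hE0 hfail
  have hcontract : 0 ≤ 1 - 2 / (β : ℝ) := sub_nonneg.2 ((div_le_one (by linarith)).2 hβ')
  refine le_of_mul_le_mul_left ?_ (by linarith : (0 : ℝ) < β)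
  calc β * ((1 - 2 / (β : ℝ)) ^ ((l.length + 2) / 2) * Real.log w)
      = (1 - 2 / (β : ℝ)) ^ ((l.length + 2) / 2) * (β * Real.log w) := by ring
    _ ≤ (1 - 2 / (β : ℝ)) ^ ((l.length + 2) / 2) * Real.log E := by gcongr
    _ ≤ β * Real.log p := by linarith

-- The exponent `20` is chosen so that `1 / 2 ≤ (14 / 15) ^ 10`.
lemma one_le_two_pow_mul_pow {v : ℝ} {r : ℕ} (hv : (14 / 15 : ℝ) ^ ((r + 1) / 2) ≤ v) :
    1 ≤ (2 : ℝ) ^ (r + 1) * v ^ 20 := by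
  calc (1 : ℝ) = 2 ^ (r + 1) * (1 / 2) ^ (r + 1) := by rw [← mul_pow]; norm_num
    _ ≤ 2 ^ (r + 1) * ((14 / 15) ^ 10) ^ (r + 1) := by gcongr; norm_num
    _ = 2 ^ (r + 1) * (14 / 15) ^ (10 * (r + 1)) := by rw [pow_mul]
    _ ≤ 2 ^ (r + 1) * (14 / 15) ^ ((r + 1) / 2 * 20) := by
        gcongr 2 ^ (r + 1) * ?_
        exact pow_le_pow_of_le_one (by norm_num) (by norm_num) (by omega)
    _ = 2 ^ (r + 1) * ((14 / 15) ^ ((r + 1) / 2)) ^ 20 := by rw [pow_mul (14 / 15 : ℝ)]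
    _ ≤ 2 ^ (r + 1) * v ^ 20 := by gcongr

lemma betaAdmissible_append_singleton_iff_of_small {β : ℕ} {E w : ℝ} {useOdd : Bool}
    {l : List ℕ} {p : ℕ} (hβ : 30 ≤ β) (hw : 1 < w) (hE : w ^ β ≤ E)
    (hsorted : (l ++ [p]).SortedGE) (h0 : 0 ∉ l ++ [p]) (hlt : ∀ q ∈ l ++ [p], (q : ℝ) < w)
    (hsmall : (2 : ℝ) ^ (l.length + 2) * (Real.log p / Real.log w) ^ 20 < 1) :
    BetaAdmissible β E useOdd (l ++ [p]) ↔ BetaAdmissible β E useOdd l := by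
  refine ⟨fun h => (betaAdmissible_append_singleton.1 h).1, fun h => ?_⟩
  by_contra hfail
  have hβ' : (30 : ℝ) ≤ β := by exact_mod_cast hβ
  have hbase : (14 / 15 : ℝ) ≤ 1 - 2 / β := by
    rw [le_sub_comm, div_le_iff₀ (by linarith)]
    linarith
  refine hsmall.not_ge (one_le_two_pow_mul_pow ((le_div_iff₀ (Real.log_pos hw)).2 ?_))
  refine le_trans ?_ (pow_mul_log_le_of_not_betaAdmissible (by omega) hw hE hsorted h0 hlt h hfail)
  have := Real.log_pos hw
  gcongr

lemma primeFactorsList_prime_mul {p e : ℕ} (hp : p.Prime) (he : e ≠ 0)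
    (hlt : ∀ q ∈ e.primeFactors, p < q) :
    (p * e).primeFactorsList = p :: e.primeFactorsList := by
  refine (List.Perm.eq_of_sortedLE ?_ (Nat.primeFactorsList_sorted _)
    (Nat.primeFactorsList_unique ?_ ?_)).symm
  · rw [List.sortedLE_iff_pairwise, List.pairwise_cons]
    exact ⟨fun q hq => (hlt q (List.mem_toFinset.2 hq)).le,
      (Nat.primeFactorsList_sorted e).pairwise⟩
  · rw [List.prod_cons, Nat.prod_primeFactorsList he]
  · simpa [hp] using fun q hq _ _ => hq

lemma sieveWeight_of_squarefree {lo hi E : ℝ} {β e : ℕ} {useOdd : Bool} (he : Squarefree e)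
    (hprimes : ∀ q ∈ e.primeFactors, lo ≤ (q : ℝ) ∧ (q : ℝ) < hi) :
    sieveWeight lo hi E β useOdd e =
      if BetaAdmissible β E useOdd e.primeFactorsList.reverse
      then (moebius e : ℝ) else 0 := by
  refine if_congr ?_ rfl rfl
  rw [BetaAdmissible, List.length_reverse]
  exact ⟨fun h => h.2.2, fun h => ⟨he, hprimes, h⟩⟩

lemma sieveWeight_one (lo hi E : ℝ) (β : ℕ) (useOdd : Bool) :
    sieveWeight lo hi E β useOdd 1 = 1 := by
  rw [sieveWeight_of_squarefree squarefree_one (by simp), if_pos,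
    moebius_apply_one, Int.cast_one]
  intro m h1 hm
  rw [Nat.primeFactorsList_one, List.reverse_nil, List.length_nil] at hm
  omega

lemma abs_sieveWeight_le_one (lo hi E : ℝ) (β : ℕ) (useOdd : Bool) (d : ℕ) :
    |sieveWeight lo hi E β useOdd d| ≤ 1 := by
  have hmoebius : |(moebius d : ℝ)| ≤ 1 := by
    exact_mod_cast abs_moebius_le_one (n := d)
  rw [sieveWeight, apply_ite abs, abs_zero]
  exact ite_le_sup _ _ _ |>.trans (sup_le hmoebius zero_le_one)

lemma sieveWeight_prime_mul {E w : ℝ} {β p e : ℕ} (hβ : 30 ≤ β) (hw : 1 < w) (hE : w ^ β ≤ E)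
    (useOdd : Bool) (hp : p.Prime) (hpw : (p : ℝ) < w) (he : Squarefree e)
    (hprimes : ∀ q ∈ e.primeFactors, p < q ∧ (q : ℝ) < w)
    (hsmall : (2 : ℝ) ^ (#e.primeFactors + 2) * (Real.log p / Real.log w) ^ 20 < 1) :
    sieveWeight 0 w E β useOdd (p * e) = -sieveWeight 0 w E β useOdd e := by
  have hpe : ¬ p ∣ e := fun h =>
    (hprimes p (hp.mem_primeFactors h he.ne_zero)).1.false
  have hcop : p.Coprime e := hp.coprime_iff_not_dvd.2 hpe
  have hsq : Squarefree (p * e) := Nat.squarefree_mul_iff.2 ⟨hcop, hp.prime.squarefree, he⟩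
  have hprimes_mul : ∀ q ∈ (p * e).primeFactors, (0 : ℝ) ≤ q ∧ (q : ℝ) < w := by
    rw [Nat.primeFactors_mul hp.ne_zero he.ne_zero, hp.primeFactors]
    intro q hq
    rcases mem_union.1 hq with hq | hq
    · exact ⟨q.cast_nonneg, mem_singleton.1 hq ▸ hpw⟩
    · exact ⟨q.cast_nonneg, (hprimes q hq).2⟩
  have hmoebius : (moebius (p * e) : ℝ) = -moebius e := by
    rw [isMultiplicative_moebius.map_mul_of_coprime hcop,
      moebius_apply_prime hp]
    push_cast
    ring
  have hrev : (p * e).primeFactorsList.reverse = e.primeFactorsList.reverse ++ [p] := by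
    rw [primeFactorsList_prime_mul hp he.ne_zero fun q hq => (hprimes q hq).1, List.reverse_cons]
  have hlength : e.primeFactorsList.reverse.length = #e.primeFactors := by
    rw [List.length_reverse]
    exact (List.toFinset_card_of_nodup
      ((Nat.squarefree_iff_nodup_primeFactorsList he.ne_zero).1 he)).symm
  have hmem : ∀ q ∈ e.primeFactorsList.reverse ++ [p], q ∈ (p * e).primeFactors := by
    rw [← hrev]
    exact fun q hq => List.mem_toFinset.2 (List.mem_reverse.1 hq)
  have hadm := betaAdmissible_append_singleton_iff_of_small (useOdd := useOdd) hβ hw hE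
    (hrev ▸ (Nat.primeFactorsList_sorted _).reverse)
    (fun h => (Nat.prime_of_mem_primeFactors (hmem 0 h)).ne_zero rfl)
    (fun q hq => (hprimes_mul q (hmem q hq)).2) (hlength ▸ hsmall)
  rw [sieveWeight_of_squarefree hsq hprimes_mul, sieveWeight_of_squarefree he fun q hq =>
    ⟨q.cast_nonneg, (hprimes q hq).2⟩, hmoebius, ← neg_zero, ← apply_ite Neg.neg, neg_zero]
  simp only [hrev, hadm]

lemma sum_divisors_prime_mul {M : Type*} [AddCommMonoid M] {p d : ℕ} (hp : p.Prime)
    (hpd : ¬ p ∣ d) (f : ℕ → M) :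
    ∑ e ∈ (p * d).divisors, f e = ∑ e ∈ d.divisors, (f e + f (p * e)) := by
  rw [Nat.divisors_mul, mul_def,
    sum_image (hp.coprime_iff_not_dvd.2 hpd).mul_injOn_divisors, sum_product, hp.divisors,
    sum_pair hp.one_lt.ne, ← sum_add_distrib]
  simp only [one_mul]

lemma card_divisors_of_squarefree {g : ℕ} (hg : Squarefree g) :
    #g.divisors = 2 ^ #g.primeFactors := by
  rw [Nat.card_divisors hg.ne_zero, ← prod_const]
  refine prod_congr rfl fun q hq => ?_
  rw [Nat.factorization_eq_one_of_squarefree hg (Nat.prime_of_mem_primeFactors hq)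
    (Nat.dvd_of_mem_primeFactors hq)]

lemma sum_divisors_sieveWeight_eq_zero {E w : ℝ} {β p g : ℕ} (hβ : 30 ≤ β) (hw : 1 < w)
    (hE : w ^ β ≤ E) (useOdd : Bool) (hg : Squarefree g) (hpg : p ∈ g.primeFactors)
    (hprimes : ∀ q ∈ g.primeFactors, p ≤ q ∧ (q : ℝ) < w)
    (hsmall : (2 : ℝ) ^ (#g.primeFactors + 1) * (Real.log p / Real.log w) ^ 20 < 1) :
    ∑ e ∈ g.divisors, sieveWeight 0 w E β useOdd e = 0 := by
  have hp := Nat.prime_of_mem_primeFactors hpg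
  obtain ⟨d, rfl⟩ := Nat.dvd_of_mem_primeFactors hpg
  have hcop : p.Coprime d := Nat.coprime_of_squarefree_mul hg
  have hpd : ¬ p ∣ d := hp.coprime_iff_not_dvd.1 hcop
  have hcard : #(p * d).primeFactors = #d.primeFactors + 1 := by
    rw [hcop.primeFactors_mul, hp.primeFactors, singleton_union, card_insert_of_notMem]
    exact fun h => hpd (Nat.dvd_of_mem_primeFactors h)
  rw [sum_divisors_prime_mul hp hpd]
  refine sum_eq_zero fun e he => ?_
  have hed := Nat.dvd_of_mem_divisors he
  have hsub : e.primeFactors ⊆ d.primeFactors :=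
    Nat.primeFactors_mono hed (Nat.ne_zero_of_mem_divisors he)
  rw [sieveWeight_prime_mul hβ hw hE useOdd hp (hprimes p hpg).2
    (hg.squarefree_of_dvd (hed.mul_left p)), add_neg_cancel]
  · intro q hq
    have hqd := Nat.dvd_of_mem_primeFactors (hsub hq)
    have hq := hprimes q (Nat.primeFactors_mono (Nat.dvd_mul_left d p) hg.ne_zero (hsub hq))
    exact ⟨hq.1.lt_of_ne fun h => hpd (h ▸ hqd), hq.2⟩
  · refine lt_of_le_of_lt ?_ hsmall
    have hle := card_le_card hsub
    exact mul_le_mul_of_nonneg_right (pow_le_pow_right₀ one_le_two (by omega))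
      (Even.pow_nonneg (by decide) _)

lemma abs_sum_divisors_sieveWeight_le (lo hi E : ℝ) (β : ℕ) (useOdd : Bool) {g : ℕ}
    (hg : Squarefree g) :
    |∑ e ∈ g.divisors, sieveWeight lo hi E β useOdd e| ≤ 2 ^ #g.primeFactors := by
  refine (abs_sum_le_sum_abs _ _).trans ?_
  refine (sum_le_card_nsmul _ _ 1 fun e _ => abs_sieveWeight_le_one lo hi E β useOdd e).trans_eq ?_
  rw [nsmul_one, card_divisors_of_squarefree hg, Nat.cast_pow, Nat.cast_ofNat]

lemma sq_sum_divisors_sieveWeight_le {E w : ℝ} {β p g : ℕ} (hβ : 30 ≤ β) (hw : 1 < w)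
    (hE : w ^ β ≤ E) (useOdd : Bool) (hg : Squarefree g) (hpg : p ∈ g.primeFactors)
    (hprimes : ∀ q ∈ g.primeFactors, p ≤ q ∧ (q : ℝ) < w) :
    (∑ e ∈ g.divisors, sieveWeight 0 w E β useOdd e) ^ 2
      ≤ 2 * (Real.log p / Real.log w) ^ 20 * 8 ^ #g.primeFactors := by
  set r := #g.primeFactors
  set v := Real.log p / Real.log w
  rcases lt_or_ge ((2 : ℝ) ^ (r + 1) * v ^ 20) 1 with hsmall | hlarge
  · rw [sum_divisors_sieveWeight_eq_zero hβ hw hE useOdd hg hpg hprimes hsmall,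
      zero_pow two_ne_zero]
    have : 0 ≤ v ^ 20 := Even.pow_nonneg (by decide) v
    positivity
  · calc (∑ e ∈ g.divisors, sieveWeight 0 w E β useOdd e) ^ 2
        ≤ (2 ^ r) ^ 2 := sq_le_sq.2 ((abs_sum_divisors_sieveWeight_le 0 w E β useOdd hg).trans
          (le_abs_self _))
      _ ≤ (2 ^ r) ^ 2 * (2 ^ (r + 1) * v ^ 20) := le_mul_of_one_le_right (by positivity) hlarge
      _ = 2 * v ^ 20 * 8 ^ r := by
        rw [show (8 : ℝ) ^ r = 2 ^ (3 * r) by rw [pow_mul]; norm_num]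
        ring

lemma prime_of_mem_filter_primeFactors {k q : ℕ} {P : ℕ → Prop} [DecidablePred P]
    (hq : q ∈ {q ∈ k.primeFactors | P q}) : q.Prime :=
  Nat.prime_of_mem_primeFactors (mem_filter.1 hq).1

lemma primeFactors_gcdPart (lo hi : ℝ) (k : ℕ) :
    (gcdPart lo hi k).primeFactors
      = {p ∈ k.primeFactors | lo ≤ ((p : ℕ) : ℝ) ∧ ((p : ℕ) : ℝ) < hi} :=
  Nat.primeFactors_prod fun _ => prime_of_mem_filter_primeFactors

lemma squarefree_gcdPart (lo hi : ℝ) (k : ℕ) : Squarefree (gcdPart lo hi k) := by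
  refine squarefree_prod_of_pairwise_isCoprime (fun p hp q hq hpq => ?_)
    fun p hp => (prime_of_mem_filter_primeFactors hp).prime.squarefree
  exact Nat.coprime_iff_isRelPrime.1 ((Nat.coprime_primes (prime_of_mem_filter_primeFactors hp)
    (prime_of_mem_filter_primeFactors hq)).2 hpq)

lemma prodPrimeFactors_localWeight_eq_pow (B : ℝ) {z w : ℝ} {n : ℕ} (hn : n ≠ 0)
    (hz : ∀ q ∈ n.primeFactors, z ≤ (q : ℝ)) :
    prodPrimeFactors (localWeight B z w) n
      = B ^ #(gcdPart 0 w n).primeFactors := by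
  rw [prodPrimeFactors_apply hn, primeFactors_gcdPart, ← prod_const,
    prod_filter]
  refine prod_congr rfl fun q hq => ?_
  rw [localWeight, if_neg (hz q hq).not_gt]
  simp only [q.cast_nonneg, true_and]

lemma mem_primeFactors_gcdPart_zero {w : ℝ} {n q : ℕ} :
    q ∈ (gcdPart 0 w n).primeFactors ↔ q ∈ n.primeFactors ∧ (q : ℝ) < w := by
  rw [primeFactors_gcdPart, mem_filter, and_iff_right q.cast_nonneg]

lemma sq_sum_divisors_gcdPart_le_of_ne_one {E w : ℝ} {β n : ℕ} (hβ : 30 ≤ β) (hw : 1 < w)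
    (hE : w ^ β ≤ E) (useOdd : Bool) (hn : n ≠ 0) (hg : gcdPart 0 w n ≠ 1) :
    (∑ e ∈ (gcdPart 0 w n).divisors, sieveWeight 0 w E β useOdd e) ^ 2
      ≤ 2 * (Real.log (gcdPart 0 w n).minFac / Real.log w) ^ 20
        * prodPrimeFactors (localWeight 8 (gcdPart 0 w n).minFac w) n := by
  set g := gcdPart 0 w n
  have hpg : g.minFac ∈ g.primeFactors :=
    (Nat.minFac_prime hg).mem_primeFactors g.minFac_dvd (squarefree_gcdPart 0 w n).ne_zero
  have hmin : ∀ q ∈ g.primeFactors, g.minFac ≤ q := fun q hq =>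
    Nat.minFac_le_of_dvd (Nat.prime_of_mem_primeFactors hq).two_le (Nat.dvd_of_mem_primeFactors hq)
  rw [prodPrimeFactors_localWeight_eq_pow 8 hn fun q hq => ?_]
  · exact sq_sum_divisors_sieveWeight_le hβ hw hE useOdd (squarefree_gcdPart 0 w n) hpg
      fun q hq => ⟨hmin q hq, (mem_primeFactors_gcdPart_zero.1 hq).2⟩
  · rcases lt_or_ge (q : ℝ) w with hqw | hqw
    · exact_mod_cast hmin q (mem_primeFactors_gcdPart_zero.2 ⟨hq, hqw⟩)
    · exact (mem_primeFactors_gcdPart_zero.1 hpg).2.le.trans hqw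

lemma sq_sum_divisors_gcdPart_le {E w : ℝ} {β n : ℕ} (hβ : 30 ≤ β) (hw : 1 < w)
    (hE : w ^ β ≤ E) (useOdd : Bool) (hn : n ≠ 0) :
    (∑ e ∈ (gcdPart 0 w n).divisors, sieveWeight 0 w E β useOdd e) ^ 2
      ≤ prodPrimeFactors (localWeight 8 w w) n
        + ∑ p ∈ Icc 1 ⌊w⌋₊ with p.Prime ∧ p ∣ n, 2 * (Real.log p / Real.log w) ^ 20
          * prodPrimeFactors (localWeight 8 p w) n := by
  set term : ℕ → ℝ := fun p => 2 * (Real.log p / Real.log w) ^ 20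
    * prodPrimeFactors (localWeight 8 p w) n
  have hF : ∀ z, 0 ≤ prodPrimeFactors (localWeight 8 z w) n := fun z =>
    prodPrimeFactors_nonneg (localWeight_nonneg (by norm_num) z w) n
  have hterm : ∀ p, 0 ≤ term p := fun p =>
    mul_nonneg (mul_nonneg zero_le_two (Even.pow_nonneg (by decide) _)) (hF p)
  by_cases hg : gcdPart 0 w n = 1
  · have hlarge : ∀ q ∈ n.primeFactors, w ≤ (q : ℝ) := fun q hq => not_lt.1 fun hqw => by
      simpa [hg] using mem_primeFactors_gcdPart_zero.2 ⟨hq, hqw⟩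
    rw [prodPrimeFactors_localWeight_eq_pow 8 hn hlarge, hg, Nat.divisors_one, sum_singleton,
      sieveWeight_one, one_pow, Nat.primeFactors_one, card_empty, pow_zero]
    exact le_add_of_nonneg_right (sum_nonneg fun p _ => hterm p)
  · have hprime := Nat.minFac_prime hg
    obtain ⟨hpn, hpw⟩ := mem_primeFactors_gcdPart_zero.1 (hprime.mem_primeFactors
      (Nat.minFac_dvd _) (squarefree_gcdPart 0 w n).ne_zero)
    have hmem : (gcdPart 0 w n).minFac ∈ {p ∈ Icc 1 ⌊w⌋₊ | p.Prime ∧ p ∣ n} := mem_filter.2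
      ⟨mem_Icc.2 ⟨hprime.one_le, Nat.le_floor hpw.le⟩, hprime, Nat.dvd_of_mem_primeFactors hpn⟩
    exact (sq_sum_divisors_gcdPart_le_of_ne_one hβ hw hE useOdd hn hg).trans
      ((single_le_sum (fun p _ => hterm p) hmem).trans (le_add_of_nonneg_left (hF w)))

lemma sum_sq_sum_divisors_gcdPart_le {E w : ℝ} {β : ℕ} (hβ : 30 ≤ β) (hw : 1 < w)
    (hE : w ^ β ≤ E) (useOdd : Bool) (N : ℕ) :
    ∑ n ∈ Icc 1 N, (∑ e ∈ (gcdPart 0 w n).divisors, sieveWeight 0 w E β useOdd e) ^ 2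
      ≤ ∑ n ∈ Ioc 0 N, prodPrimeFactors (localWeight 8 w w) n
        + ∑ p ∈ Icc 1 ⌊w⌋₊ with p.Prime, 2 * (Real.log p / Real.log w) ^ 20
          * (8 * ∑ m ∈ Ioc 0 (N / p), prodPrimeFactors (localWeight 8 p w) m) := by
  refine (sum_le_sum fun n hn => sq_sum_divisors_gcdPart_le hβ hw hE useOdd
    (Nat.one_le_iff_ne_zero.1 (mem_Icc.1 hn).1)).trans ?_
  rw [sum_add_distrib, sum_comm' (t' := {p ∈ Icc 1 ⌊w⌋₊ | p.Prime})
    (s' := fun p => {n ∈ Ioc 0 N | p ∣ n}) fun n p => ?_]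
  · refine add_le_add le_rfl (sum_le_sum fun p hp => ?_)
    rw [← mul_sum]
    refine mul_le_mul_of_nonneg_left (sum_filter_dvd_le ?_ (mem_filter.1 hp).2.isPrimePow N)
      (mul_nonneg zero_le_two (Even.pow_nonneg (by decide) _))
    exact prodPrimeFactors_isPrimePow_mul_le (localWeight_nonneg (by norm_num) p w)
      (localWeight_le (by norm_num) p w) (by norm_num)
  · simp only [mem_filter, mem_Icc, mem_Ioc]
    tauto

end BetaSieve

section MeanSquare

open ArithmeticFunction Finset Filter

lemma one_sub_mul_log_le_two_mul_log_floor_div {δ X Y : ℝ} {d : ℕ} (hX : 0 < X)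
    (hX4 : 4 ≤ X ^ (1 - δ)) (hXY : X ≤ Y) (hd : 0 < d) (hdX : (d : ℝ) ≤ X ^ δ) :
    (1 - δ) * Real.log X ≤ 2 * Real.log (⌊Y⌋₊ / d : ℕ) := by
  set N := ⌊Y⌋₊ / d with hN
  have : (0 : ℝ) < d := by exact_mod_cast hd
  have hle : X ^ (1 - δ) ≤ Y / d := by
    rw [Real.rpow_sub hX, Real.rpow_one]
    gcongr
    exact hX.le.trans hXY
  have hlt : Y / d < N + 1 := by
    rw [hN, ← Nat.floor_div_natCast]
    exact Nat.lt_floor_add_one _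
  have hsq : X ^ (1 - δ) ≤ (N : ℝ) ^ 2 := by nlinarith
  calc (1 - δ) * Real.log X = Real.log (X ^ (1 - δ)) := (Real.log_rpow hX _).symm
    _ ≤ Real.log ((N : ℝ) ^ 2) := Real.log_le_log (by linarith) hsq
    _ = 2 * Real.log N := by rw [Real.log_pow, Nat.cast_ofNat]

lemma log_floor_div_le {A X Y : ℝ} (hA : 0 ≤ A) (hX : 1 ≤ X) (hYX : Y ≤ X ^ A) (d : ℕ) :
    Real.log (⌊Y⌋₊ / d : ℕ) ≤ A * Real.log X := by
  rcases eq_or_ne (⌊Y⌋₊ / d) 0 with hN | hN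
  · rw [hN, Nat.cast_zero, Real.log_zero]
    exact mul_nonneg hA (Real.log_nonneg hX)
  · rw [← Real.log_rpow (by linarith)]
    exact Real.log_le_log (by exact_mod_cast hN.bot_lt)
      (((Nat.le_floor_iff' hN).1 (Nat.div_le_self _ d)).trans hYX)

lemma log_mul_sum_prodPrimeFactors_localWeight_rpow_le {B δ A X Y z : ℝ} {d : ℕ} (hB : 1 ≤ B)
    (hδ0 : 0 < δ) (hδ1 : δ < 1) (hA : 1 ≤ A) (hX1 : 1 < X) (hX4 : 4 ≤ X ^ (1 - δ)) (hXY : X ≤ Y)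
    (hYX : Y ≤ X ^ A) (hz : 2 ≤ z) (hzX : z ≤ X ^ δ) (hd : 0 < d) (hdX : (d : ℝ) ≤ X ^ δ) :
    Real.log X * ∑ m ∈ Ioc 0 (⌊Y⌋₊ / d), prodPrimeFactors (localWeight B z (X ^ δ)) m
      ≤ 2 / (1 - δ) * (6 * B + 1) * (A / δ) ^ (3 / 2 : ℝ) * Real.exp (5 * (B + 1))
        * (Real.log (X ^ δ) / Real.log z) ^ (3 / 2 * B) * (Y / d) := by
  set N := ⌊Y⌋₊ / d with hN
  set S := ∑ m ∈ Ioc 0 N, prodPrimeFactors (localWeight B z (X ^ δ)) m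
  have hX0 : 0 < X := by linarith
  have hδ1' : 0 < 1 - δ := sub_pos.2 hδ1
  have hlogX := Real.log_pos hX1
  have hlogz : 0 < Real.log z := Real.log_pos (by linarith)
  have hloglow := one_sub_mul_log_le_two_mul_log_floor_div hX0 hX4 hXY hd hdX
  have hS : 0 ≤ S := sum_nonneg fun m _ =>
    prodPrimeFactors_nonneg (localWeight_nonneg (zero_le_one.trans hB) z _) m
  have hNY : (N : ℝ) ≤ Y / d := by
    rw [hN, ← Nat.floor_div_natCast]
    exact Nat.floor_le (div_nonneg (hX0.le.trans hXY) d.cast_nonneg)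
  have hlogN : Real.log N ≤ A / δ * Real.log (X ^ δ) := by
    rw [Real.log_rpow hX0, ← mul_assoc, div_mul_cancel₀ A hδ0.ne']
    exact log_floor_div_le (by linarith) hX1.le hYX d
  have hu : 1 ≤ Real.log (X ^ δ) / Real.log z :=
    (one_le_div hlogz).2 (Real.log_le_log (by linarith) hzX)
  have hmain := log_mul_sum_prodPrimeFactors_localWeight_le hB hz hzX hu
    (div_mul_cancel₀ _ hlogz.ne').ge ((one_le_div hδ0).2 (by linarith)) hlogN
  set c := (Real.log (X ^ δ) / Real.log z) ^ (3 / 2 * B) * (A / δ) ^ (3 / 2 : ℝ)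
    * Real.exp (5 * (B + 1))
  calc Real.log X * S = 1 / (1 - δ) * ((1 - δ) * Real.log X * S) := by field_simp
    _ ≤ 1 / (1 - δ) * (2 * Real.log N * S) := by gcongr
    _ = 2 / (1 - δ) * (Real.log N * S) := by ring
    _ ≤ 2 / (1 - δ) * ((6 * B + 1) * (N * c)) := by gcongr
    _ ≤ 2 / (1 - δ) * ((6 * B + 1) * (Y / d * c)) := by gcongr
    _ = _ := by ring

lemma sum_prime_log_div_log_pow_le {w : ℝ} (hw : Real.exp 1 ≤ w) {k : ℕ} (hk : k ≠ 0) :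
    ∑ p ∈ Icc 1 ⌊w⌋₊ with p.Prime, (Real.log p / Real.log w) ^ k / p ≤ 3 := by
  have hw1 : 1 ≤ w := (Real.one_le_exp zero_le_one).trans hw
  have hlogw : 1 ≤ Real.log w := (Real.le_log_iff_exp_le (by linarith)).2 hw
  have hfloor : 1 ≤ ⌊w⌋₊ := Nat.one_le_floor_iff _ |>.2 hw1
  calc ∑ p ∈ Icc 1 ⌊w⌋₊ with p.Prime, (Real.log p / Real.log w) ^ k / p
      ≤ ∑ p ∈ Icc 1 ⌊w⌋₊ with p.Prime, 1 / Real.log w * (Real.log p / p) := by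
        refine sum_le_sum fun p hp => ?_
        have hp := mem_Icc.1 (mem_filter.1 hp).1
        have hle : Real.log p ≤ Real.log w := Real.log_le_log (by exact_mod_cast hp.1)
          ((Nat.cast_le.2 hp.2).trans (Nat.floor_le (by linarith)))
        calc (Real.log p / Real.log w) ^ k / p ≤ Real.log p / Real.log w / p := by
              gcongr
              exact pow_le_of_le_one (by positivity) ((div_le_one (by linarith)).2 hle) hk
          _ = 1 / Real.log w * (Real.log p / p) := by ring
    _ ≤ 1 / Real.log w * (3 / 2 * (1 + Real.log w)) := by
        rw [← mul_sum]
        gcongr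
        refine (sum_prime_log_div_le hfloor).trans ?_
        gcongr
        · exact log_four_le
        · exact Nat.floor_le (by linarith)
    _ ≤ 3 := by
        rw [one_div_mul_eq_div, div_le_iff₀ (by linarith)]
        linarith

lemma mul_sum_sq_sum_divisors_gcdPart_le_of_mean_le {E w K L Y : ℝ} {β N : ℕ} (hβ : 30 ≤ β)
    (hw : 3 ≤ w) (hE : w ^ β ≤ E) (hK : 0 ≤ K) (hL : 0 ≤ L) (hY : 0 ≤ Y)
    (hmean : ∀ (z : ℝ) (d : ℕ), 2 ≤ z → z ≤ w → 0 < d → (d : ℝ) ≤ w →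
      L * ∑ m ∈ Ioc 0 (N / d), prodPrimeFactors (localWeight 8 z w) m
        ≤ K * (Real.log w / Real.log z) ^ 12 * (Y / d)) (useOdd : Bool) :
    L * ∑ n ∈ Icc 1 N, (∑ e ∈ (gcdPart 0 w n).divisors, sieveWeight 0 w E β useOdd e) ^ 2
      ≤ 49 * K * Y := by
  have hlogw : 0 < Real.log w := Real.log_pos (by linarith)
  have hfirst : L * ∑ n ∈ Ioc 0 N, prodPrimeFactors (localWeight 8 w w) n ≤ K * Y := by
    simpa [div_self hlogw.ne'] using hmean w 1 (by linarith) le_rfl one_pos (by simp; linarith)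
  have hterm : ∀ p ∈ {p ∈ Icc 1 ⌊w⌋₊ | p.Prime}, 16 * (Real.log p / Real.log w) ^ 20
      * (L * ∑ m ∈ Ioc 0 (N / p), prodPrimeFactors (localWeight 8 p w) m)
        ≤ 16 * K * Y * ((Real.log p / Real.log w) ^ 8 / p) := by
    intro p hp
    obtain ⟨hpw, hprime⟩ := mem_filter.1 hp
    have hpw : (p : ℝ) ≤ w :=
      (Nat.cast_le.2 (mem_Icc.1 hpw).2).trans (Nat.floor_le (by linarith))
    have hlogp : 0 < Real.log p := Real.log_pos (by exact_mod_cast hprime.one_lt)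
    calc _ ≤ 16 * (Real.log p / Real.log w) ^ 20
          * (K * (Real.log w / Real.log p) ^ 12 * (Y / p)) :=
          mul_le_mul_of_nonneg_left
            (hmean p p (by exact_mod_cast hprime.two_le) hpw hprime.pos hpw) (by positivity)
      _ = 16 * K * Y * ((Real.log p / Real.log w) ^ 8 / p) := by field_simp
  calc _ ≤ L * (∑ n ∈ Ioc 0 N, prodPrimeFactors (localWeight 8 w w) n
        + ∑ p ∈ Icc 1 ⌊w⌋₊ with p.Prime, 2 * (Real.log p / Real.log w) ^ 20
          * (8 * ∑ m ∈ Ioc 0 (N / p), prodPrimeFactors (localWeight 8 p w) m)) :=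
        mul_le_mul_of_nonneg_left
          (sum_sq_sum_divisors_gcdPart_le hβ (by linarith) hE useOdd N) hL
    _ = L * ∑ n ∈ Ioc 0 N, prodPrimeFactors (localWeight 8 w w) n
        + ∑ p ∈ Icc 1 ⌊w⌋₊ with p.Prime, 16 * (Real.log p / Real.log w) ^ 20
          * (L * ∑ m ∈ Ioc 0 (N / p), prodPrimeFactors (localWeight 8 p w) m) := by
        rw [mul_add, mul_sum (s := {p ∈ Icc 1 ⌊w⌋₊ | p.Prime})]
        congr 1
        exact sum_congr rfl fun p _ => by ring
    _ ≤ K * Y + 16 * K * Y * 3 := by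
        refine add_le_add hfirst ((sum_le_sum hterm).trans ?_)
        rw [← mul_sum]
        gcongr
        exact sum_prime_log_div_log_pow_le (by linarith [Real.exp_one_lt_d9]) (by norm_num)
    _ = 49 * K * Y := by ring

lemma beta_sieve_weights_divisor_sum_mean_square_general {β : ℕ} (hβ : 30 ≤ β) {δ η A : ℝ}
    (hδ0 : 0 < δ) (hδ1 : δ < 1) (hβδ : β * δ ≤ η) (hA : 1 ≤ A) :
    ∃ C : ℝ, 0 < C ∧ ∃ X₀ : ℝ, ∀ X : ℝ, X₀ ≤ X →
      ∀ Y : ℝ, X ≤ Y → Y ≤ X ^ A → ∀ useOdd : Bool,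
        ∑ n ∈ Icc 1 ⌊Y⌋₊, (∑ e ∈ (gcdPart 0 (X ^ δ) n).divisors,
          sieveWeight 0 (X ^ δ) (X ^ η) β useOdd e) ^ 2 ≤ C * Y / Real.log X := by
  have hδ1' : 0 < 1 - δ := sub_pos.2 hδ1
  set K := 2 / (1 - δ) * (6 * 8 + 1) * (A / δ) ^ (3 / 2 : ℝ) * Real.exp (5 * (8 + 1))
  have hK : 0 < K := by positivity
  obtain ⟨X₀, hX₀⟩ := eventually_atTop.1 <| (eventually_gt_atTop 1).and <|
    ((tendsto_rpow_atTop hδ1').eventually_ge_atTop 4).and <|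
      (tendsto_rpow_atTop hδ0).eventually_ge_atTop 3
  refine ⟨49 * K, by positivity, X₀, fun X hX Y hXY hYX useOdd => ?_⟩
  obtain ⟨hX1, hX4, hX3⟩ := hX₀ X hX
  have hlevel : (X ^ δ) ^ β ≤ X ^ η := by
    rw [← Real.rpow_natCast, ← Real.rpow_mul (by linarith), mul_comm]
    exact Real.rpow_le_rpow_of_exponent_le hX1.le hβδ
  rw [le_div_iff₀' (Real.log_pos hX1)]
  refine mul_sum_sq_sum_divisors_gcdPart_le_of_mean_le hβ hX3 hlevel hK.le (Real.log_pos hX1).le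
    (by linarith) (fun z d hz hzw hd hdw => ?_) useOdd
  rw [← Real.rpow_natCast, show ((12 : ℕ) : ℝ) = 3 / 2 * 8 by norm_num]
  exact log_mul_sum_prodPrimeFactors_localWeight_rpow_le (by norm_num) hδ0 hδ1 hA hX1 hX4 hXY hYX
    hz hzw hd hdw

end MeanSquare

/-- For fixed `δ ∈ (0, 1/30000]` and all sufficiently large `X`, with `w = X^δ`,
`E = X^{1/1000}` and the β-sieve weights `ρ^±` (β = 30) of level `E` on primes `< w`,
one has `Σ_{n ≤ Y} (Σ_{e ∣ (n, P(w))} ρ_e^±)² ≤ C(δ)·Y/log X` for `X ≤ Y ≤ X^{10}`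
and both choices of sign. -/
theorem beta_sieve_weights_divisor_sum_mean_square
    (δ : ℝ) (hδ : 0 < δ) (hδ' : δ ≤ 1 / 30000) :
    ∃ C : ℝ, 0 < C ∧ ∃ X₀ : ℝ, ∀ X : ℝ, X₀ ≤ X →
      ∀ Y : ℝ, X ≤ Y → Y ≤ X ^ (10 : ℝ) → ∀ useOdd : Bool,
        ∑ n ∈ Finset.Icc 1 ⌊Y⌋₊,
            (∑ e ∈ (gcdPart 0 (X ^ δ) n).divisors,
              sieveWeight 0 (X ^ δ) (X ^ ((1 : ℝ) / 1000)) 30 useOdd e) ^ 2 ≤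
          C * Y / Real.log X :=
  beta_sieve_weights_divisor_sum_mean_square_general le_rfl hδ (by linarith)
    (by push_cast; linarith) (by norm_num)
end
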